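/- arXiv:2103.09387 — 4 statements merged into one kernel-verified Lean document; each statement's English description precedes it below -/
import Mathlib

section
/- Let d ≥ 2, p ≥ 1, s ∈ (0,1] with sp > 1, M ∈ (0, ∞], and 0 < ϑ ≤ 1. Let [u]_n^p = ∫_{ℝ^{d-1}} ∫₀^M ⨏_{a x_d}^{b x_d} |u(x', y_d) - u(x', x_d)|^p / (ϑ x_d)^{ps} dy_d dx_d dx' and [u]_t^p = ∫_{ℝ^{d-1}} ∫₀^M ⨏_{B(x', κ x_d)} |u(y', x_d) - u(x', x_d)|^p / (ϑ x_d)^{ps} dy' dx_d dx'. Then there exist constants C, a, b, κ with 0 ≤ a < b ≤ 1, 0 < κ < 1, (a-1)² + κ² ≤ ϑ², such that [u]_n ≤ C |u|_{𝔚^{s,p}_ϑ(ℝ^d_{M+})} and [u]_t ≤ C |u|_{𝔚^{s,p}_ϑ(ℝ^d_{M+})} for all u ∈ 𝔚^{s,p}_ϑ(ℝ^d_{M+}). -/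
open MeasureTheory
open scoped ENNReal NNReal

/-- The localized nonlocal seminorm (to the `p`-th power) on the stripe
`ℝ^{d-1} × (0,M]` (with `M = ∞` allowed, giving the half space), with horizon
parameter `τ`, written with points `(x', x_d)` and the Euclidean distance
condition `dist(y',x')² + (y_d - x_d)² < (τ x_d)²`. -/
noncomputable def stripeSemi (d : ℕ) (S : Set ℝ) (τ p s : ℝ)
    (u : EuclideanSpace ℝ (Fin (d - 1)) → ℝ → ℝ) : ℝ≥0∞ :=
  ∫⁻ x' : EuclideanSpace ℝ (Fin (d - 1)), ∫⁻ xd in S,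
    ∫⁻ y' : EuclideanSpace ℝ (Fin (d - 1)),
      ∫⁻ yd in S ∩ {t : ℝ | dist y' x' ^ 2 + (t - xd) ^ 2 < (τ * xd) ^ 2},
        ENNReal.ofReal (|u y' yd - u x' xd| ^ p / (τ * xd) ^ ((d : ℝ) + p * s))

/-- Normal directional nonlocal seminorm (to the `p`-th power) on the stripe. -/
noncomputable def stripeNormalSemi (d : ℕ) (S : Set ℝ) (ϑ a b p s : ℝ)
    (u : EuclideanSpace ℝ (Fin (d - 1)) → ℝ → ℝ) : ℝ≥0∞ :=
  ∫⁻ x' : EuclideanSpace ℝ (Fin (d - 1)), ∫⁻ xd in S,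
    (ENNReal.ofReal ((b - a) * xd))⁻¹ *
      ∫⁻ yd in Set.Ioc (a * xd) (b * xd),
        ENNReal.ofReal (|u x' yd - u x' xd| ^ p / (ϑ * xd) ^ (p * s))

/-- Tangential directional nonlocal seminorm (to the `p`-th power) on the stripe. -/
noncomputable def stripeTangentSemi (d : ℕ) (S : Set ℝ) (ϑ κ p s : ℝ)
    (u : EuclideanSpace ℝ (Fin (d - 1)) → ℝ → ℝ) : ℝ≥0∞ :=
  ∫⁻ x' : EuclideanSpace ℝ (Fin (d - 1)), ∫⁻ xd in S,
    (volume (Metric.ball x' (κ * xd)))⁻¹ *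
      ∫⁻ y' in Metric.ball x' (κ * xd),
        ENNReal.ofReal (|u y' xd - u x' xd| ^ p / (ϑ * xd) ^ (p * s))

/-- The inner double integral of `stripeSemi`, as a function of the point `q = (x', x_d)`. -/
noncomputable def stripeInner (d : ℕ) (S : Set ℝ) (τ p s : ℝ)
    (u : EuclideanSpace ℝ (Fin (d - 1)) → ℝ → ℝ) (q : EuclideanSpace ℝ (Fin (d - 1)) × ℝ) :
    ℝ≥0∞ :=
  ∫⁻ y' : EuclideanSpace ℝ (Fin (d - 1)),
    ∫⁻ yd in S ∩ {t : ℝ | dist y' q.1 ^ 2 + (t - q.2) ^ 2 < (τ * q.2) ^ 2},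
      ENNReal.ofReal (|u y' yd - u q.1 q.2| ^ p / (τ * q.2) ^ ((d : ℝ) + p * s))

theorem measurable_stripeInner (d : ℕ) {S : Set ℝ} (hS : MeasurableSet S) (τ p s : ℝ)
    {u : EuclideanSpace ℝ (Fin (d - 1)) → ℝ → ℝ}
    (hu : Measurable (fun q : EuclideanSpace ℝ (Fin (d - 1)) × ℝ => u q.1 q.2)) :
    Measurable (stripeInner d S τ p s u) := by
  let X := EuclideanSpace ℝ (Fin (d - 1))
  let T : Set (((X × ℝ) × X) × ℝ) :=
    Prod.snd ⁻¹' S ∩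
      {w | dist w.1.2 w.1.1.1 ^ 2 + (w.2 - w.1.1.2) ^ 2 < (τ * w.1.1.2) ^ 2}
  have hT : MeasurableSet T := by
    refine (measurable_snd hS).inter (measurableSet_lt ?_ ?_) <;> fun_prop
  have h1 : Measurable (fun w : ((X × ℝ) × X) × ℝ => u w.1.2 w.2) :=
    hu.comp (by fun_prop : Measurable (fun w : ((X × ℝ) × X) × ℝ => (w.1.2, w.2)))
  have h2 : Measurable (fun w : ((X × ℝ) × X) × ℝ => u w.1.1.1 w.1.1.2) :=
    hu.comp (by fun_prop : Measurable (fun w : ((X × ℝ) × X) × ℝ => w.1.1))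
  let g : ((X × ℝ) × X) × ℝ → ℝ≥0∞ := fun w =>
    ENNReal.ofReal (|u w.1.2 w.2 - u w.1.1.1 w.1.1.2| ^ p /
      (τ * w.1.1.2) ^ ((d : ℝ) + p * s))
  have hg : Measurable g := by
    refine ENNReal.measurable_ofReal.comp (Measurable.div ?_ ?_)
    · exact (h1.sub h2).abs.pow_const p
    · exact Measurable.pow_const (by fun_prop) _
  have hm : Measurable (fun q : X × ℝ => ∫⁻ y' : X, ∫⁻ yd, T.indicator g ((q, y'), yd)) :=
    ((hg.indicator hT).lintegral_prod_right').lintegral_prod_right'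
  convert hm using 1
  funext q
  refine lintegral_congr fun y' => ?_
  rw [← lintegral_indicator]
  · refine lintegral_congr fun yd => ?_
    rfl
  · exact hS.inter (measurableSet_lt (by fun_prop) (by fun_prop))

theorem abs_sub_rpow_le_two_rpow_mul {p : ℝ} (hp : 1 ≤ p) (x y z : ℝ) :
    |x - y| ^ p ≤ 2 ^ (p - 1) * (|z - y| ^ p + |z - x| ^ p) := by
  have h := NNReal.rpow_add_le_mul_rpow_add_rpow (Real.nnabs (z - y)) (Real.nnabs (z - x)) hp
  have h' : (|z - y| + |z - x|) ^ p ≤ 2 ^ (p - 1) * (|z - y| ^ p + |z - x| ^ p) := by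
    exact_mod_cast h
  refine le_trans (Real.rpow_le_rpow (abs_nonneg _) ?_ (by linarith)) h'
  rw [abs_sub_comm z x, add_comm]
  exact abs_sub_le x z y

/-- Integrating the `p`-th power of increments over a box contained in the interaction region
of `y` is controlled by `stripeInner` at `y`. -/
theorem lintegral_box_le_stripeInner {d : ℕ} {S : Set ℝ} {p s ϑ r : ℝ} (hr : 0 < r)
    (hp : 1 ≤ p) (hs : 0 < s)
    (u : EuclideanSpace ℝ (Fin (d - 1)) → ℝ → ℝ) {B : Set (EuclideanSpace ℝ (Fin (d - 1)))}
    (hB : MeasurableSet B) {I : Set ℝ} (hI : MeasurableSet I)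
    (y : EuclideanSpace ℝ (Fin (d - 1)) × ℝ) (hy : 0 < ϑ * y.2) (hyr : ϑ * y.2 ≤ r)
    (hBI : ∀ z' ∈ B, ∀ t ∈ I, t ∈ S ∧ dist z' y.1 ^ 2 + (t - y.2) ^ 2 < (ϑ * y.2) ^ 2) :
    ∫⁻ z' in B, ∫⁻ t in I, ENNReal.ofReal (|u z' t - u y.1 y.2| ^ p) ≤
      ENNReal.ofReal (r ^ ((d : ℝ) + p * s)) * stripeInner d S ϑ p s u y := by
  have he : 0 ≤ (d : ℝ) + p * s := by positivity
  rw [stripeInner, ← lintegral_const_mul' _ _ ENNReal.ofReal_ne_top]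
  refine le_trans (setLIntegral_mono' hB fun z' hz' => ?_) (setLIntegral_le_lintegral B _)
  rw [← lintegral_const_mul' _ _ ENNReal.ofReal_ne_top]
  refine le_trans (setLIntegral_mono' hI fun t _ => ?_)
    (lintegral_mono_set fun t ht => hBI z' hz' t ht)
  rw [← ENNReal.ofReal_mul (by positivity)]
  refine ENNReal.ofReal_le_ofReal ?_
  have h1 : (ϑ * y.2) ^ ((d : ℝ) + p * s) ≤ r ^ ((d : ℝ) + p * s) :=
    Real.rpow_le_rpow hy.le hyr he
  have h2 : 0 < (ϑ * y.2) ^ ((d : ℝ) + p * s) := Real.rpow_pos_of_pos hy _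
  rw [mul_div_assoc', le_div_iff₀ h2, mul_comm]
  exact mul_le_mul_of_nonneg_right h1 (by positivity)

/-- The constant in the pointwise increment estimate. -/
noncomputable def incrementConst (d : ℕ) (p ϑ : ℝ) : ℝ :=
  2 ^ (p - 1) * ϑ ^ d /
    (ϑ / 4 * (ϑ / 4) ^ (d - 1) *
      (volume (Metric.ball (0 : EuclideanSpace ℝ (Fin (d - 1))) 1)).toReal)

theorem volume_unit_ball_toReal_pos (n : ℕ) :
    0 < (volume (Metric.ball (0 : EuclideanSpace ℝ (Fin n)) 1)).toReal :=
  ENNReal.toReal_pos (Metric.measure_ball_pos volume _ one_pos).ne' measure_ball_lt_top.ne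

theorem incrementConst_pos {d : ℕ} {p ϑ : ℝ} (hϑ : 0 < ϑ) : 0 < incrementConst d p ϑ := by
  have := volume_unit_ball_toReal_pos (d - 1)
  unfold incrementConst
  positivity

/-- Pointwise bound of an increment by the local energies at its two end points. -/
theorem increment_le_stripeInner_add {d : ℕ} (hd : 2 ≤ d) {p s ϑ : ℝ} (hp : 1 ≤ p)
    (hs : 0 < s) (hϑ0 : 0 < ϑ) (hϑ1 : ϑ ≤ 1) {S : Set ℝ}
    (hSpos : ∀ t ∈ S, 0 < t) (hSlow : ∀ t ∈ S, ∀ r, 0 < r → r ≤ t → r ∈ S)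
    {u : EuclideanSpace ℝ (Fin (d - 1)) → ℝ → ℝ}
    (hu : Measurable (fun q : EuclideanSpace ℝ (Fin (d - 1)) × ℝ => u q.1 q.2))
    {x' y' : EuclideanSpace ℝ (Fin (d - 1))} {xd yd : ℝ} (hx : xd ∈ S)
    (h1 : (1 - ϑ / 4) * xd ≤ yd) (h2 : yd ≤ xd) (h3 : dist y' x' ≤ ϑ / 4 * xd) :
    ENNReal.ofReal (|u y' yd - u x' xd| ^ p / (ϑ * xd) ^ (p * s)) ≤
      ENNReal.ofReal (incrementConst d p ϑ) *
        (stripeInner d S ϑ p s u (x', xd) + stripeInner d S ϑ p s u (y', yd)) := by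
  have hx0 : 0 < xd := hSpos _ hx
  have hy0 : 0 < yd := by nlinarith
  set B := Metric.ball x' (ϑ / 4 * xd) with hBdef
  set I := Set.Ioc ((1 - ϑ / 4) * xd) xd with hIdef
  set v := (volume (Metric.ball (0 : EuclideanSpace ℝ (Fin (d - 1))) 1)).toReal with hv
  have hv0 : 0 < v := volume_unit_ball_toReal_pos (d - 1)
  have hr : 0 < ϑ * xd := by positivity
  have hIS : ∀ t ∈ I, t ∈ S := fun t ht =>
    hSlow xd hx t (by nlinarith [ht.1]) ht.2
  have hX : ∫⁻ z' in B, ∫⁻ t in I, ENNReal.ofReal (|u z' t - u x' xd| ^ p) ≤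
      ENNReal.ofReal ((ϑ * xd) ^ ((d : ℝ) + p * s)) * stripeInner d S ϑ p s u (x', xd) := by
    refine lintegral_box_le_stripeInner hr hp hs u measurableSet_ball measurableSet_Ioc
      (x', xd) hr le_rfl fun z' hz' t ht => ⟨hIS t ht, ?_⟩
    have e1 : dist z' x' ^ 2 ≤ (ϑ / 4 * xd) ^ 2 :=
      pow_le_pow_left₀ dist_nonneg (Metric.mem_ball.1 hz').le 2
    have e2 : (t - xd) ^ 2 ≤ (ϑ / 4 * xd) ^ 2 :=
      sq_le_sq' (by linarith [ht.1]) (by nlinarith [ht.2])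
    change dist z' x' ^ 2 + (t - xd) ^ 2 < (ϑ * xd) ^ 2
    nlinarith [pow_pos hr 2]
  have hY : ∫⁻ z' in B, ∫⁻ t in I, ENNReal.ofReal (|u z' t - u y' yd| ^ p) ≤
      ENNReal.ofReal ((ϑ * xd) ^ ((d : ℝ) + p * s)) * stripeInner d S ϑ p s u (y', yd) := by
    refine lintegral_box_le_stripeInner hr hp hs u measurableSet_ball measurableSet_Ioc
      (y', yd) (by positivity) (by dsimp only; gcongr) fun z' hz' t ht => ⟨hIS t ht, ?_⟩
    have e0 : dist z' y' ≤ ϑ / 2 * xd := by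
      linarith [dist_triangle_right z' y' x', Metric.mem_ball.1 hz']
    have e1 : dist z' y' ^ 2 ≤ (ϑ / 2 * xd) ^ 2 := pow_le_pow_left₀ dist_nonneg e0 2
    have e2 : (t - yd) ^ 2 ≤ (ϑ / 4 * xd) ^ 2 :=
      sq_le_sq' (by linarith [ht.1]) (by linarith [ht.2])
    have e3 : (ϑ * (3 / 4 * xd)) ^ 2 ≤ (ϑ * yd) ^ 2 := by
      refine pow_le_pow_left₀ (by positivity) ?_ 2
      gcongr
      nlinarith
    change dist z' y' ^ 2 + (t - yd) ^ 2 < (ϑ * yd) ^ 2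
    nlinarith [pow_pos hr 2]
  have hm : Measurable (fun w : EuclideanSpace ℝ (Fin (d - 1)) × ℝ =>
      ENNReal.ofReal (|u w.1 w.2 - u x' xd| ^ p)) :=
    ENNReal.measurable_ofReal.comp ((hu.sub_const _).abs.pow_const p)
  set A := |u y' yd - u x' xd| ^ p with hA
  have hbox : ENNReal.ofReal A * volume I * volume B ≤
      ENNReal.ofReal (2 ^ (p - 1)) *
        (ENNReal.ofReal ((ϑ * xd) ^ ((d : ℝ) + p * s)) *
          (stripeInner d S ϑ p s u (x', xd) + stripeInner d S ϑ p s u (y', yd))) := by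
    calc ENNReal.ofReal A * volume I * volume B
        = ∫⁻ _ in B, ∫⁻ _ in I, ENNReal.ofReal A := by
          rw [setLIntegral_const, setLIntegral_const]
      _ ≤ ∫⁻ z' in B, ∫⁻ t in I, ENNReal.ofReal (2 ^ (p - 1)) *
            (ENNReal.ofReal (|u z' t - u x' xd| ^ p) +
              ENNReal.ofReal (|u z' t - u y' yd| ^ p)) := by
          refine lintegral_mono fun z' => lintegral_mono fun t => ?_
          rw [← ENNReal.ofReal_add (by positivity) (by positivity),
            ← ENNReal.ofReal_mul (by positivity)]
          exact ENNReal.ofReal_le_ofReal (abs_sub_rpow_le_two_rpow_mul hp _ _ _)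
      _ = ENNReal.ofReal (2 ^ (p - 1)) *
            ((∫⁻ z' in B, ∫⁻ t in I, ENNReal.ofReal (|u z' t - u x' xd| ^ p)) +
              ∫⁻ z' in B, ∫⁻ t in I, ENNReal.ofReal (|u z' t - u y' yd| ^ p)) := by
          rw [← lintegral_add_left hm.lintegral_prod_right',
            ← lintegral_const_mul' _ _ ENNReal.ofReal_ne_top]
          refine lintegral_congr fun z' => ?_
          have hmz : Measurable fun t => ENNReal.ofReal (|u z' t - u x' xd| ^ p) :=
            hm.comp measurable_prodMk_left
          rw [← lintegral_add_left hmz, ← lintegral_const_mul' _ _ ENNReal.ofReal_ne_top]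
      _ ≤ _ := by
          rw [mul_add (ENNReal.ofReal ((ϑ * xd) ^ ((d : ℝ) + p * s)))]
          gcongr
  have hvI : volume I = ENNReal.ofReal (ϑ / 4 * xd) := by
    rw [hIdef, Real.volume_Ioc]; congr 1; ring
  have : Nontrivial (EuclideanSpace ℝ (Fin (d - 1))) :=
    Module.nontrivial_of_finrank_pos (R := ℝ) (by rw [finrank_euclideanSpace_fin]; omega)
  have hvB : volume B = ENNReal.ofReal ((ϑ / 4 * xd) ^ (d - 1) * v) := by
    rw [hBdef, Measure.addHaar_ball volume x' (by positivity), finrank_euclideanSpace_fin,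
      ENNReal.ofReal_mul (by positivity), hv, ENNReal.ofReal_toReal measure_ball_lt_top.ne]
  set k := ϑ / 4 * xd * ((ϑ / 4 * xd) ^ (d - 1) * v) * (ϑ * xd) ^ (p * s) with hk
  have hps : 0 < (ϑ * xd) ^ (p * s) := Real.rpow_pos_of_pos hr _
  have hk0 : 0 < k := by positivity
  have hpow : xd ^ d = xd ^ (d - 1) * xd := by
    rw [← pow_succ]; congr 1; omega
  have hconst : 2 ^ (p - 1) * (ϑ * xd) ^ ((d : ℝ) + p * s) = k * incrementConst d p ϑ := by
    rw [Real.rpow_add hr, Real.rpow_natCast, hk, incrementConst, ← hv, mul_pow, mul_pow, hpow]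
    field_simp
  have hA' : ENNReal.ofReal k * ENNReal.ofReal (A / (ϑ * xd) ^ (p * s)) =
      ENNReal.ofReal A * volume I * volume B := by
    rw [hvI, hvB, ← ENNReal.ofReal_mul hk0.le, ← ENNReal.ofReal_mul (by positivity),
      ← ENNReal.ofReal_mul (by positivity), hk]
    congr 1
    field_simp
  rw [← mul_assoc, ← ENNReal.ofReal_mul (by positivity), hconst, ENNReal.ofReal_mul hk0.le,
    mul_assoc (ENNReal.ofReal k), ← hA'] at hbox
  exact (ENNReal.mul_le_mul_iff_right (ENNReal.ofReal_pos.2 hk0).ne' ENNReal.ofReal_ne_top).1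
    hbox

/-- Averaging over the intervals `(a x, x]` is bounded on `L¹` of a down-closed set. -/
theorem lintegral_average_Ioc_le {a : ℝ} (ha0 : 0 < a) (ha1 : a < 1) {S : Set ℝ}
    (hS : MeasurableSet S) (hSpos : ∀ t ∈ S, 0 < t)
    (hSlow : ∀ t ∈ S, ∀ r, 0 < r → r ≤ t → r ∈ S) {f : ℝ → ℝ≥0∞} (hf : Measurable f) :
    ∫⁻ x in S, (ENNReal.ofReal ((1 - a) * x))⁻¹ * ∫⁻ y in Set.Ioc (a * x) (1 * x), f y ≤
      ENNReal.ofReal (1 / a) * ∫⁻ y in S, f y := by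
  let T : Set (ℝ × ℝ) := Prod.fst ⁻¹' S ∩ ({w | a * w.1 < w.2} ∩ {w | w.2 ≤ w.1})
  have hT : MeasurableSet T :=
    (measurable_fst hS).inter
      ((measurableSet_lt (by fun_prop) (by fun_prop)).inter
        (measurableSet_le (by fun_prop) (by fun_prop)))
  let g : ℝ × ℝ → ℝ≥0∞ :=
    T.indicator fun w => (ENNReal.ofReal ((1 - a) * w.1))⁻¹ * f w.2
  have hg : Measurable g := by
    refine Measurable.indicator ?_ hT
    exact (by fun_prop : Measurable fun w : ℝ × ℝ => ENNReal.ofReal ((1 - a) * w.1)).inv.mul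
      (hf.comp measurable_snd)
  have hL : ∫⁻ x in S, (ENNReal.ofReal ((1 - a) * x))⁻¹ *
      ∫⁻ y in Set.Ioc (a * x) (1 * x), f y = ∫⁻ x, ∫⁻ y, g (x, y) := by
    rw [← lintegral_indicator hS]
    refine lintegral_congr fun x => ?_
    by_cases hx : x ∈ S
    · rw [Set.indicator_of_mem hx, ← lintegral_const_mul _ hf,
        ← lintegral_indicator measurableSet_Ioc]
      refine lintegral_congr fun y => ?_
      simp [g, T, Set.indicator, hx]
    · simp [g, T, Set.indicator, hx]
  have hswap : ∫⁻ x, ∫⁻ y, g (x, y) = ∫⁻ y, ∫⁻ x, g (x, y) :=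
    lintegral_lintegral_swap (f := fun x y => g (x, y)) hg.aemeasurable
  rw [hL, hswap, ← lintegral_const_mul _ hf,
    ← lintegral_indicator hS]
  refine lintegral_mono fun y => ?_
  by_cases hy : y ∈ S
  · rw [Set.indicator_of_mem hy]
    have hy0 := hSpos y hy
    have h1a : 0 < 1 - a := by linarith
    calc ∫⁻ x, g (x, y)
        ≤ ∫⁻ x in Set.Icc y (y / a), (ENNReal.ofReal ((1 - a) * y))⁻¹ * f y := by
          rw [← lintegral_indicator measurableSet_Icc]
          refine lintegral_mono fun x => ?_
          by_cases hx : (x, y) ∈ T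
          · have hxy : x ∈ Set.Icc y (y / a) :=
              ⟨hx.2.2, by rw [le_div_iff₀ ha0, mul_comm]; exact hx.2.1.le⟩
            simp only [g]
            rw [Set.indicator_of_mem hx, Set.indicator_of_mem hxy]
            gcongr
            exact hxy.1
          · simp only [g]
            rw [Set.indicator_of_notMem hx]
            exact zero_le
      _ = ENNReal.ofReal (1 / a) * f y := by
          rw [setLIntegral_const, Real.volume_Icc, mul_right_comm,
            ← ENNReal.ofReal_inv_of_pos (by positivity), ← ENNReal.ofReal_mul (by positivity)]
          congr 2
          field_simp
  · rw [Set.indicator_of_notMem hy]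
    refine le_of_eq ?_
    rw [lintegral_eq_zero_iff' (by fun_prop)]
    refine Filter.Eventually.of_forall fun x => Set.indicator_of_notMem (fun hx => hy ?_) _
    exact hSlow x hx.1 y ((mul_pos ha0 (hSpos x hx.1)).trans hx.2.1) hx.2.2

/-- Averaging over balls of a fixed radius preserves the integral. -/
theorem lintegral_average_ball_eq {n : ℕ} {r : ℝ} (hr : 0 < r)
    {f : EuclideanSpace ℝ (Fin n) → ℝ≥0∞} (hf : Measurable f) :
    ∫⁻ x, (volume (Metric.ball x r))⁻¹ * ∫⁻ y in Metric.ball x r, f y = ∫⁻ y, f y := by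
  let c := volume (Metric.ball (0 : EuclideanSpace ℝ (Fin n)) r)
  have hc : ∀ x : EuclideanSpace ℝ (Fin n), volume (Metric.ball x r) = c := fun x =>
    Measure.addHaar_ball_center volume x r
  have hc0 : c ≠ 0 := (Metric.measure_ball_pos volume _ hr).ne'
  have hct : c ≠ ⊤ := measure_ball_lt_top.ne
  have hT : MeasurableSet
      {w : EuclideanSpace ℝ (Fin n) × EuclideanSpace ℝ (Fin n) | dist w.2 w.1 < r} :=
    measurableSet_lt (by fun_prop) (by fun_prop)
  have hg := (hf.comp measurable_snd).indicator hT
  simp only [hc]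
  rw [lintegral_const_mul' _ _ (ENNReal.inv_ne_top.2 hc0)]
  have hL : ∫⁻ x, ∫⁻ y in Metric.ball x r, f y = ∫⁻ y, c * f y := by
    calc ∫⁻ x, ∫⁻ y in Metric.ball x r, f y
        = ∫⁻ x, ∫⁻ y, Set.indicator
            {w : EuclideanSpace ℝ (Fin n) × EuclideanSpace ℝ (Fin n) | dist w.2 w.1 < r}
            (f ∘ Prod.snd) (x, y) := by
          refine lintegral_congr fun x => ?_
          rw [← lintegral_indicator measurableSet_ball]
          rfl
      _ = ∫⁻ y, ∫⁻ x, Set.indicator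
            {w : EuclideanSpace ℝ (Fin n) × EuclideanSpace ℝ (Fin n) | dist w.2 w.1 < r}
            (f ∘ Prod.snd) (x, y) := lintegral_lintegral_swap hg.aemeasurable
      _ = ∫⁻ y, c * f y := by
          refine lintegral_congr fun y => ?_
          rw [← hc y, mul_comm, ← setLIntegral_const, ← lintegral_indicator measurableSet_ball]
          refine lintegral_congr fun x => ?_
          simp [Set.indicator, dist_comm]
  rw [hL, lintegral_const_mul _ hf, ← mul_assoc, ENNReal.inv_mul_cancel hc0 hct, one_mul]

theorem stripeNormalSemi_le {d : ℕ} (hd : 2 ≤ d) {p s ϑ : ℝ} (hp : 1 ≤ p)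
    (hs : 0 < s) (hϑ0 : 0 < ϑ) (hϑ1 : ϑ ≤ 1) {S : Set ℝ} (hS : MeasurableSet S)
    (hSpos : ∀ t ∈ S, 0 < t) (hSlow : ∀ t ∈ S, ∀ r, 0 < r → r ≤ t → r ∈ S)
    {u : EuclideanSpace ℝ (Fin (d - 1)) → ℝ → ℝ}
    (hu : Measurable (fun q : EuclideanSpace ℝ (Fin (d - 1)) × ℝ => u q.1 q.2)) :
    stripeNormalSemi d S ϑ (1 - ϑ / 4) 1 p s u ≤
      ENNReal.ofReal (incrementConst d p ϑ * (1 + 1 / (1 - ϑ / 4))) *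
        stripeSemi d S ϑ p s u := by
  have hF := measurable_stripeInner d hS ϑ p s hu
  set F := stripeInner d S ϑ p s u
  have ha0 : 0 < 1 - ϑ / 4 := by linarith
  have hsemi : stripeSemi d S ϑ p s u = ∫⁻ x', ∫⁻ xd in S, F (x', xd) := rfl
  rw [hsemi, ENNReal.ofReal_mul (incrementConst_pos hϑ0).le, stripeNormalSemi,
    ← lintegral_const_mul' _ _ (by finiteness)]
  refine lintegral_mono fun x' => ?_
  have hFx : Measurable fun t => F (x', t) := hF.comp measurable_prodMk_left
  refine le_trans (b := ∫⁻ xd in S, ENNReal.ofReal (incrementConst d p ϑ) * (F (x', xd) +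
    (ENNReal.ofReal ((1 - (1 - ϑ / 4)) * xd))⁻¹ *
      ∫⁻ yd in Set.Ioc ((1 - ϑ / 4) * xd) (1 * xd), F (x', yd))) ?_ ?_
  · refine setLIntegral_mono' hS fun xd hx => ?_
    have hx0 := hSpos xd hx
    have hw : 0 < (1 - (1 - ϑ / 4)) * xd := by
      have : 0 < ϑ / 4 * xd := by positivity
      linarith
    refine le_trans (b := (ENNReal.ofReal ((1 - (1 - ϑ / 4)) * xd))⁻¹ *
      ∫⁻ yd in Set.Ioc ((1 - ϑ / 4) * xd) (1 * xd),
        ENNReal.ofReal (incrementConst d p ϑ) * (F (x', xd) + F (x', yd))) ?_ (le_of_eq ?_)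
    · refine mul_le_mul' le_rfl ?_
      refine setLIntegral_mono' measurableSet_Ioc fun yd hy => ?_
      exact increment_le_stripeInner_add hd hp hs hϑ0 hϑ1 hSpos hSlow hu hx hy.1.le
        (by linarith [hy.2]) (by rw [dist_self]; positivity)
    · rw [lintegral_const_mul' _ _ ENNReal.ofReal_ne_top,
        lintegral_add_left measurable_const, setLIntegral_const, Real.volume_Ioc,
        ← sub_mul, mul_left_comm, mul_add, mul_left_comm,
        ENNReal.inv_mul_cancel (ENNReal.ofReal_pos.2 hw).ne' ENNReal.ofReal_ne_top,
        mul_one]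
  · rw [lintegral_const_mul' _ _ ENNReal.ofReal_ne_top, lintegral_add_left hFx,
      ENNReal.ofReal_add one_pos.le (by positivity), ENNReal.ofReal_one, mul_assoc, add_mul,
      one_mul]
    gcongr
    exact lintegral_average_Ioc_le ha0 (by linarith) hS hSpos hSlow hFx

theorem stripeTangentSemi_le {d : ℕ} (hd : 2 ≤ d) {p s ϑ : ℝ} (hp : 1 ≤ p)
    (hs : 0 < s) (hϑ0 : 0 < ϑ) (hϑ1 : ϑ ≤ 1) {S : Set ℝ} (hS : MeasurableSet S)
    (hSpos : ∀ t ∈ S, 0 < t) (hSlow : ∀ t ∈ S, ∀ r, 0 < r → r ≤ t → r ∈ S)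
    {u : EuclideanSpace ℝ (Fin (d - 1)) → ℝ → ℝ}
    (hu : Measurable (fun q : EuclideanSpace ℝ (Fin (d - 1)) × ℝ => u q.1 q.2)) :
    stripeTangentSemi d S ϑ (ϑ / 4) p s u ≤
      ENNReal.ofReal (incrementConst d p ϑ * 2) * stripeSemi d S ϑ p s u := by
  have hF := measurable_stripeInner d hS ϑ p s hu
  set F := stripeInner d S ϑ p s u
  have hsemi : stripeSemi d S ϑ p s u = ∫⁻ x', ∫⁻ xd in S, F (x', xd) := rfl
  let X := EuclideanSpace ℝ (Fin (d - 1))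
  have hswap : ∫⁻ x', ∫⁻ xd in S, F (x', xd) = ∫⁻ xd in S, ∫⁻ x', F (x', xd) :=
    lintegral_lintegral_swap hF.aemeasurable
  let T : Set ((X × ℝ) × X) := {w | dist w.2 w.1.1 < ϑ / 4 * w.1.2}
  have hT : MeasurableSet T := measurableSet_lt (by fun_prop) (by fun_prop)
  have hball : ∀ q : X × ℝ, volume (Metric.ball q.1 (ϑ / 4 * q.2)) =
      ∫⁻ y', T.indicator (fun _ => 1) (q, y') := fun q => by
    rw [← setLIntegral_one, ← lintegral_indicator measurableSet_ball]
    rfl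
  have hint : ∀ q : X × ℝ, ∫⁻ y' in Metric.ball q.1 (ϑ / 4 * q.2), F (y', q.2) =
      ∫⁻ y', T.indicator (fun w => F (w.2, w.1.2)) (q, y') := fun q => by
    rw [← lintegral_indicator measurableSet_ball]
    rfl
  have hG : Measurable fun q : X × ℝ => (volume (Metric.ball q.1 (ϑ / 4 * q.2)))⁻¹ *
      ∫⁻ y' in Metric.ball q.1 (ϑ / 4 * q.2), F (y', q.2) := by
    simp only [hball, hint]
    refine Measurable.mul (Measurable.inv ?_) ?_
    · exact (measurable_const.indicator hT).lintegral_prod_right'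
    · exact ((hF.comp (by fun_prop : Measurable fun w : (X × ℝ) × X => (w.2, w.1.2))).indicator
        hT).lintegral_prod_right'
  have havg : ∫⁻ x' : X, ∫⁻ xd in S, (volume (Metric.ball x' (ϑ / 4 * xd)))⁻¹ *
      ∫⁻ y' in Metric.ball x' (ϑ / 4 * xd), F (y', xd) = ∫⁻ x', ∫⁻ xd in S, F (x', xd) := by
    rw [hswap, lintegral_lintegral_swap hG.aemeasurable]
    refine setLIntegral_congr_fun hS fun xd hx => ?_
    have := hSpos xd hx
    exact lintegral_average_ball_eq (by positivity) (hF.comp measurable_prodMk_right)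
  refine le_trans (b := ∫⁻ x' : X, ∫⁻ xd in S, ENNReal.ofReal (incrementConst d p ϑ) * (F (x', xd) +
    (volume (Metric.ball x' (ϑ / 4 * xd)))⁻¹ *
      ∫⁻ y' in Metric.ball x' (ϑ / 4 * xd), F (y', xd))) ?_ (le_of_eq ?_)
  · refine lintegral_mono fun x' => setLIntegral_mono' hS fun xd hx => ?_
    have hx0 := hSpos xd hx
    refine le_trans (b := (volume (Metric.ball x' (ϑ / 4 * xd)))⁻¹ *
      ∫⁻ y' in Metric.ball x' (ϑ / 4 * xd),
        ENNReal.ofReal (incrementConst d p ϑ) * (F (x', xd) + F (y', xd))) ?_ (le_of_eq ?_)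
    · refine mul_le_mul' le_rfl ?_
      refine setLIntegral_mono' measurableSet_ball fun y' hy => ?_
      exact increment_le_stripeInner_add hd hp hs hϑ0 hϑ1 hSpos hSlow hu hx
        (by nlinarith) le_rfl (Metric.mem_ball.1 hy).le
    · rw [lintegral_const_mul' _ _ ENNReal.ofReal_ne_top,
        lintegral_add_left measurable_const, setLIntegral_const,
        mul_left_comm, mul_add, mul_left_comm,
        ENNReal.inv_mul_cancel (Metric.measure_ball_pos volume x' (by positivity)).ne'
          measure_ball_lt_top.ne,
        mul_one]
  · have hsplit : ∀ x' : X, ∫⁻ xd in S, ENNReal.ofReal (incrementConst d p ϑ) * (F (x', xd) +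
        (volume (Metric.ball x' (ϑ / 4 * xd)))⁻¹ *
          ∫⁻ y' in Metric.ball x' (ϑ / 4 * xd), F (y', xd)) =
        ENNReal.ofReal (incrementConst d p ϑ) * ((∫⁻ xd in S, F (x', xd)) +
          ∫⁻ xd in S, (volume (Metric.ball x' (ϑ / 4 * xd)))⁻¹ *
            ∫⁻ y' in Metric.ball x' (ϑ / 4 * xd), F (y', xd)) := fun x' => by
      have hFx : Measurable fun t => F (x', t) := hF.comp measurable_prodMk_left
      rw [lintegral_const_mul' _ _ ENNReal.ofReal_ne_top, lintegral_add_left hFx]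
    rw [lintegral_congr hsplit, lintegral_const_mul' _ _ ENNReal.ofReal_ne_top,
      lintegral_add_left hF.lintegral_prod_right', havg, ← hsemi, ← mul_two,
      ENNReal.ofReal_mul (incrementConst_pos hϑ0).le, ENNReal.ofReal_ofNat]
    ring

/-- Control of the normal and tangential directional seminorms by the localized
nonlocal seminorm `|u|_{𝔚^{s,p}_ϑ(ℝ^d_{M+})}` on the stripe `ℝ^{d-1} × (0,M]`,
`M ∈ (0,∞]`. -/
theorem stmt_8 (d : ℕ) (hd : 2 ≤ d) (p s ϑ : ℝ) (hp : 1 ≤ p) (hs0 : 0 < s)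
    (hs1 : s ≤ 1) (hsp : 1 < s * p) (hϑ0 : 0 < ϑ) (hϑ1 : ϑ ≤ 1)
    (M : ℝ≥0∞) (hM : 0 < M) :
    ∃ C a b κ : ℝ, 0 < C ∧ 0 ≤ a ∧ a < b ∧ b ≤ 1 ∧ 0 < κ ∧ κ < 1 ∧
      (a - 1) ^ 2 + κ ^ 2 ≤ ϑ ^ 2 ∧
      ∀ u : EuclideanSpace ℝ (Fin (d - 1)) → ℝ → ℝ,
        Measurable (fun q : EuclideanSpace ℝ (Fin (d - 1)) × ℝ => u q.1 q.2) →
        stripeSemi d {t : ℝ | 0 < t ∧ ENNReal.ofReal t ≤ M} ϑ p s u ≠ ⊤ →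
        stripeNormalSemi d {t : ℝ | 0 < t ∧ ENNReal.ofReal t ≤ M} ϑ a b p s u ≤
            ENNReal.ofReal (C ^ p) *
              stripeSemi d {t : ℝ | 0 < t ∧ ENNReal.ofReal t ≤ M} ϑ p s u ∧
          stripeTangentSemi d {t : ℝ | 0 < t ∧ ENNReal.ofReal t ≤ M} ϑ κ p s u ≤
            ENNReal.ofReal (C ^ p) *
              stripeSemi d {t : ℝ | 0 < t ∧ ENNReal.ofReal t ≤ M} ϑ p s u := by
  set S : Set ℝ := {t : ℝ | 0 < t ∧ ENNReal.ofReal t ≤ M}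
  have hS : MeasurableSet S :=
    (measurableSet_lt measurable_const measurable_id).inter
      (measurableSet_le ENNReal.measurable_ofReal measurable_const)
  have hSpos : ∀ t ∈ S, 0 < t := fun t ht => ht.1
  have hSlow : ∀ t ∈ S, ∀ r, 0 < r → r ≤ t → r ∈ S := fun t ht r hr hrt =>
    ⟨hr, (ENNReal.ofReal_le_ofReal hrt).trans ht.2⟩
  have hc := incrementConst_pos (d := d) (p := p) hϑ0
  have ha0 : 0 < 1 - ϑ / 4 := by linarith
  set K := incrementConst d p ϑ * (1 + 1 / (1 - ϑ / 4)) with hK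
  have hK0 : 0 < K := by positivity
  have h2K : incrementConst d p ϑ * 2 ≤ K := by
    have : 1 ≤ 1 / (1 - ϑ / 4) := by rw [le_div_iff₀ ha0]; linarith
    rw [hK]
    gcongr
    linarith
  have hCp : (K ^ p⁻¹) ^ p = K := Real.rpow_inv_rpow hK0.le (by linarith)
  refine ⟨K ^ p⁻¹, 1 - ϑ / 4, 1, ϑ / 4, by positivity, ha0.le, by linarith, le_rfl,
    by positivity, by linarith, by nlinarith, fun u hu _ => ?_⟩
  rw [hCp]
  refine ⟨stripeNormalSemi_le hd hp hs0 hϑ0 hϑ1 hS hSpos hSlow hu,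
    (stripeTangentSemi_le hd hp hs0 hϑ0 hϑ1 hS hSpos hSlow hu).trans ?_⟩
  gcongr
end

section
/- Let d ≥ 2, p ≥ 1, s ∈ (0,1] with sp > 1, and ϑ ∈ (0,1]. There exists a constant C = C(d, p, s, ϑ) such that for every M > 0 and every Lipschitz function u on the closure of ℝ^d_{M+} belonging to 𝔚^{s,p}_ϑ(ℝ^d_{M+}) with u(x', 0) = 0 for all x' ∈ ℝ^{d-1}, one has (∫_{ℝ^d_{M+}} |u(x)|^p / x_d^{ps} dx)^{1/p} ≤ C |u|_{𝔚^{s,p}_ϑ(ℝ^d_{M+})}. -/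
open MeasureTheory
open scoped ENNReal NNReal

open Filter Topology

theorem exists_abs_rpow_le_mul_add {p q : ℝ} (hp : 1 ≤ p) (hq : 1 < q) :
    ∃ C : ℝ, 0 < C ∧ ∀ a b : ℝ, |a| ^ p ≤ q * |b| ^ p + C * |b - a| ^ p := by
  have hp0 : 0 < p := by linarith
  have hq0 : 0 < q := by linarith
  set θ : ℝ := q ^ (-(1 / p)) with hθ
  have hθ0 : 0 < θ := Real.rpow_pos_of_pos hq0 _
  have hθ1 : θ < 1 := Real.rpow_lt_one_of_one_lt_of_neg hq (by
    have := one_div_pos.2 hp0; linarith)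
  have hθp : θ ^ p = q⁻¹ := by
    rw [hθ, ← Real.rpow_mul hq0.le, show -(1 / p) * p = -1 by field_simp, Real.rpow_neg_one]
  refine ⟨(1 - θ) * ((1 - θ) ^ p)⁻¹, mul_pos (by linarith)
    (inv_pos.2 (Real.rpow_pos_of_pos (by linarith) _)), fun a b => ?_⟩
  have hconv := (convexOn_rpow hp).2 (x := |b| / θ) (y := |b - a| / (1 - θ))
    (show 0 ≤ |b| / θ by positivity)
    (show 0 ≤ |b - a| / (1 - θ) from div_nonneg (abs_nonneg _) (by linarith))
    hθ0.le (show 0 ≤ 1 - θ by linarith) (by ring)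
  simp only [smul_eq_mul] at hconv
  rw [mul_div_cancel₀ _ hθ0.ne', mul_div_cancel₀ _ (by linarith : (1 - θ) ≠ 0),
    Real.div_rpow (abs_nonneg _) hθ0.le, Real.div_rpow (abs_nonneg _) (by linarith), hθp] at hconv
  have habs : |a| ≤ |b| + |b - a| := by
    have := abs_sub b (b - a)
    simpa using this
  calc |a| ^ p ≤ (|b| + |b - a|) ^ p := Real.rpow_le_rpow (abs_nonneg _) habs hp0.le
    _ ≤ θ * (|b| ^ p / q⁻¹) + (1 - θ) * (|b - a| ^ p / (1 - θ) ^ p) := hconv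
    _ ≤ 1 * (|b| ^ p / q⁻¹) + (1 - θ) * (|b - a| ^ p / (1 - θ) ^ p) := by gcongr
    _ = q * |b| ^ p + (1 - θ) * ((1 - θ) ^ p)⁻¹ * |b - a| ^ p := by
      rw [div_inv_eq_mul]; ring

theorem lintegral_comp_add_smul {E : Type*} [NormedAddCommGroup E] [NormedSpace ℝ E]
    [FiniteDimensional ℝ E] [MeasurableSpace E] [BorelSpace E] (μ : Measure E)
    [μ.IsAddHaarMeasure] (f : E → ℝ≥0∞) (a : E) {r : ℝ} (hr : 0 < r) :
    ∫⁻ y, f (a + r • y) ∂μ = ENNReal.ofReal (r ^ Module.finrank ℝ E)⁻¹ * ∫⁻ y, f y ∂μ := by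
  have h := lintegral_map_equiv (μ := μ) (fun y => f (a + y))
    (Homeomorph.smul (isUnit_iff_ne_zero.2 hr.ne').unit).toMeasurableEquiv
  have h2 := Measure.map_addHaar_smul μ hr.ne'
  rw [abs_of_pos (by positivity)] at h2
  change ∫⁻ y, f (a + y) ∂(Measure.map (r • ·) μ) = ∫⁻ y, f (a + r • y) ∂μ at h
  rw [← h, h2, lintegral_smul_measure, lintegral_add_left_eq_self, smul_eq_mul]

theorem lintegral_le_of_map_le {X : Type*} [MeasurableSpace X] {ν : Measure X} {T : X → X}
    (hT : Measurable T) {ρ q : ℝ≥0∞} (hν : ν.map T ≤ ρ • ν) {g D : X → ℝ≥0∞}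
    (hD : Measurable D) (hg : ∀ z, g z ≤ q * g (T z) + D z)
    (hlim : ∀ᵐ z ∂ν, Tendsto (fun n : ℕ => q ^ n * g (T^[n] z)) atTop (𝓝 0)) :
    ∫⁻ z, g z ∂ν ≤ (1 - q * ρ)⁻¹ * ∫⁻ z, D z ∂ν := by
  have hfin : ∀ (n : ℕ) (z : X),
      g z ≤ q ^ n * g (T^[n] z) + ∑ k ∈ Finset.range n, q ^ k * D (T^[k] z) := by
    intro n z
    induction n with
    | zero => simp
    | succ n ih =>
      refine ih.trans ?_
      rw [Finset.sum_range_succ, Function.iterate_succ_apply']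
      calc _ ≤ q ^ n * (q * g (T (T^[n] z)) + D (T^[n] z))
            + ∑ k ∈ Finset.range n, q ^ k * D (T^[k] z) := by gcongr; exact hg _
        _ = _ := by ring
  have hpt : ∀ᵐ z ∂ν, g z ≤ ∑' k : ℕ, q ^ k * D (T^[k] z) := by
    filter_upwards [hlim] with z hz
    have h1 : Tendsto (fun n : ℕ => q ^ n * g (T^[n] z) + ∑' k : ℕ, q ^ k * D (T^[k] z)) atTop
        (𝓝 (0 + ∑' k : ℕ, q ^ k * D (T^[k] z))) := hz.add tendsto_const_nhds
    rw [zero_add] at h1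
    exact ge_of_tendsto' h1 fun n => (hfin n z).trans (by gcongr; exact ENNReal.sum_le_tsum _)
  have hiter : ∀ k : ℕ, ∫⁻ z, D (T^[k] z) ∂ν ≤ ρ ^ k * ∫⁻ z, D z ∂ν := by
    intro k
    induction k with
    | zero => simp
    | succ k ih =>
      have hm : Measurable fun z => D (T^[k] z) := hD.comp (hT.iterate k)
      calc ∫⁻ z, D (T^[k + 1] z) ∂ν = ∫⁻ z, D (T^[k] z) ∂(ν.map T) := by
            rw [lintegral_map hm hT]; simp [Function.iterate_succ_apply]
        _ ≤ ∫⁻ z, D (T^[k] z) ∂(ρ • ν) := lintegral_mono' hν le_rfl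
        _ = ρ * ∫⁻ z, D (T^[k] z) ∂ν := by rw [lintegral_smul_measure, smul_eq_mul]
        _ ≤ ρ * (ρ ^ k * ∫⁻ z, D z ∂ν) := by gcongr
        _ = _ := by ring
  calc ∫⁻ z, g z ∂ν ≤ ∫⁻ z, ∑' k : ℕ, q ^ k * D (T^[k] z) ∂ν := lintegral_mono_ae hpt
    _ = ∑' k : ℕ, q ^ k * ∫⁻ z, D (T^[k] z) ∂ν := by
      have hm : ∀ k : ℕ, Measurable fun z => D (T^[k] z) := fun k => hD.comp (hT.iterate k)
      rw [lintegral_tsum fun k => ((hm k).const_mul _).aemeasurable]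
      exact tsum_congr fun k => lintegral_const_mul _ (hm k)
    _ ≤ ∑' k : ℕ, (q * ρ) ^ k * ∫⁻ z, D z ∂ν := by
      refine ENNReal.tsum_le_tsum fun k => ?_
      rw [mul_pow, mul_assoc]
      gcongr
      exact hiter k
    _ = _ := by rw [ENNReal.tsum_mul_right, ENNReal.tsum_geometric]

theorem map_shear_prod_le {E : Type*} [NormedAddCommGroup E] [NormedSpace ℝ E]
    [MeasurableSpace E] [BorelSpace E] [SecondCountableTopology E] (μ : Measure E) [SFinite μ]
    [μ.IsAddRightInvariant] (η : Measure ℝ) [SFinite η] {ρ : ℝ≥0∞} {l : ℝ}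
    (hη : η.map (l * ·) ≤ ρ • η) (b : E) :
    (μ.prod η).map (fun z : E × ℝ => (z.1 + z.2 • b, l * z.2)) ≤ ρ • μ.prod η := by
  have hT : Measurable fun z : E × ℝ => (z.1 + z.2 • b, l * z.2) := by fun_prop
  refine Measure.le_iff.2 fun S hS => ?_
  have hF : Measurable fun t : ℝ => μ ((fun x => (x, t)) ⁻¹' S) :=
    measurable_measure_prodMk_right hS
  rw [Measure.map_apply hT hS, Measure.prod_apply_symm (hT hS), Measure.smul_apply,
    Measure.prod_apply_symm hS, smul_eq_mul, ← smul_eq_mul, ← lintegral_smul_measure]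
  calc _ = ∫⁻ t, μ ((fun x => (x, l * t)) ⁻¹' S) ∂η :=
        lintegral_congr fun t => measure_preimage_add_right μ (t • b) ((fun x => (x, l * t)) ⁻¹' S)
    _ = ∫⁻ t, μ ((fun x => (x, t)) ⁻¹' S) ∂(η.map (l * ·)) :=
        (lintegral_map hF (measurable_const_mul l)).symm
    _ ≤ _ := lintegral_mono' hη le_rfl

/-- The weight `t ^ (-σ)` on `(0, M]`. -/
noncomputable def stripeWeight (M σ : ℝ) : Measure ℝ :=
  (volume.restrict (Set.Ioc 0 M)).withDensity fun t => ENNReal.ofReal (t ^ (-σ))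

instance (M σ : ℝ) : SFinite (stripeWeight M σ) := by
  unfold stripeWeight; infer_instance

theorem lintegral_stripeWeight (M σ : ℝ) (f : ℝ → ℝ≥0∞) :
    ∫⁻ t, f t ∂stripeWeight M σ = ∫⁻ t in Set.Ioc 0 M, ENNReal.ofReal (t ^ (-σ)) * f t := by
  rw [stripeWeight, lintegral_withDensity_eq_lintegral_mul_non_measurable _ (by fun_prop)
    (ae_of_all _ fun t => ENNReal.ofReal_lt_top)]
  rfl

theorem map_mul_stripeWeight_le (M σ : ℝ) {l : ℝ} (hl0 : 0 < l) (hl1 : l ≤ 1) :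
    (stripeWeight M σ).map (l * ·) ≤ ENNReal.ofReal (l ^ (σ - 1)) • stripeWeight M σ := by
  refine Measure.le_iff.2 fun S hS => ?_
  have key : ∀ A : Set ℝ, MeasurableSet A → stripeWeight M σ A =
      ∫⁻ t, (Set.Ioc 0 M ∩ A).indicator (fun t => ENNReal.ofReal (t ^ (-σ))) t := by
    intro A hA
    rw [stripeWeight, withDensity_apply _ hA, Measure.restrict_restrict hA, Set.inter_comm,
      lintegral_indicator (measurableSet_Ioc.inter hA)]
  have hlS : MeasurableSet ((l * ·) ⁻¹' S) := (measurable_const_mul l) hS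
  rw [Measure.map_apply (measurable_const_mul l) hS, key _ hlS, Measure.smul_apply, key _ hS,
    smul_eq_mul]
  have hcv := lintegral_comp_add_smul volume
    ((Set.Ioc 0 M ∩ S).indicator (fun t => ENNReal.ofReal (t ^ (-σ)))) 0 hl0
  simp only [zero_add, smul_eq_mul, Module.finrank_self, pow_one] at hcv
  have hpow : ENNReal.ofReal (l ^ (σ - 1)) = ENNReal.ofReal (l ^ σ) * ENNReal.ofReal l⁻¹ := by
    rw [← ENNReal.ofReal_mul (by positivity), Real.rpow_sub_one hl0.ne', div_eq_mul_inv]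
  rw [hpow, mul_assoc, ← hcv, ← lintegral_const_mul' _ _ ENNReal.ofReal_ne_top]
  refine lintegral_mono fun t => ?_
  by_cases ht : t ∈ Set.Ioc 0 M ∩ (l * ·) ⁻¹' S
  swap
  · rw [Set.indicator_of_notMem ht]
    exact zero_le
  have hmem_t := ht
  obtain ⟨⟨ht0, htM⟩, htS⟩ := ht
  have hmem : l * t ∈ Set.Ioc 0 M ∩ S := ⟨⟨by positivity, by nlinarith⟩, htS⟩
  rw [Set.indicator_of_mem hmem, Set.indicator_of_mem hmem_t]
  rw [← ENNReal.ofReal_mul (by positivity), Real.mul_rpow hl0.le ht0.le, ← mul_assoc,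
    ← Real.rpow_add hl0]
  simp

theorem exists_lintegral_rpow_le_shear {p σ l₀ : ℝ} (hp : 1 ≤ p) (hσ : 1 < σ) (hσp : σ ≤ p)
    (hl₀ : 0 < l₀) (hl₀1 : l₀ < 1) :
    ∃ C : ℝ≥0∞, C ≠ ⊤ ∧ ∀ {E : Type} [NormedAddCommGroup E] [NormedSpace ℝ E]
      [MeasurableSpace E] [BorelSpace E] [SecondCountableTopology E] (μ : Measure E) [SFinite μ]
      [μ.IsAddRightInvariant] (M K : ℝ) (v : E × ℝ → ℝ), Continuous v →
      (∀ x t, 0 < t → |v (x, t)| ≤ K * t) → ∀ (b : E) (l : ℝ), 0 < l → l ≤ l₀ →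
      ∫⁻ z, ENNReal.ofReal (|v z| ^ p) ∂μ.prod (stripeWeight M σ) ≤
        C * ∫⁻ z, ENNReal.ofReal (|v (z.1 + z.2 • b, l * z.2) - v z| ^ p)
          ∂μ.prod (stripeWeight M σ) := by
  have hp0 : 0 < p := by linarith
  set q : ℝ := l₀ ^ (-((σ - 1) / 2)) with hq
  have hq1 : 1 < q := Real.one_lt_rpow_of_pos_of_lt_one_of_neg hl₀ hl₀1 (by linarith)
  have hq0 : 0 < q := by linarith
  obtain ⟨C, hC, hCle⟩ := exists_abs_rpow_le_mul_add hp hq1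
  have hqρ : ENNReal.ofReal q * ENNReal.ofReal (l₀ ^ (σ - 1)) < 1 := by
    rw [← ENNReal.ofReal_mul hq0.le, hq, ← Real.rpow_add hl₀, ENNReal.ofReal_lt_one]
    exact Real.rpow_lt_one hl₀.le hl₀1 (by linarith)
  refine ⟨(1 - ENNReal.ofReal q * ENNReal.ofReal (l₀ ^ (σ - 1)))⁻¹ * ENNReal.ofReal C,
    ENNReal.mul_ne_top (ENNReal.inv_ne_top.2 (tsub_pos_of_lt hqρ).ne') ENNReal.ofReal_ne_top, ?_⟩
  intro E _ _ _ _ _ μ _ _ M K v hv hvK b l hl hll₀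
  set T : E × ℝ → E × ℝ := fun z => (z.1 + z.2 • b, l * z.2) with hT
  have hTm : Measurable T := by fun_prop
  have hDm : Measurable fun z => ENNReal.ofReal (|v (T z) - v z| ^ p) := by
    have := hv.measurable
    fun_prop
  have hiter : ∀ (n : ℕ) (z : E × ℝ), (T^[n] z).2 = l ^ n * z.2 := by
    intro n z
    induction n with
    | zero => simp
    | succ n ih => rw [Function.iterate_succ_apply', pow_succ', mul_assoc, ← ih]
  have hlp : q * l ^ p < 1 := by
    calc q * l ^ p ≤ q * l₀ ^ p := by gcongr
      _ = l₀ ^ (p - (σ - 1) / 2) := by rw [hq, ← Real.rpow_add hl₀]; ring_nf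
      _ < 1 := Real.rpow_lt_one hl₀.le hl₀1 (by linarith)
  have hmap : (μ.prod (stripeWeight M σ)).map T ≤
      ENNReal.ofReal (l₀ ^ (σ - 1)) • μ.prod (stripeWeight M σ) := by
    refine map_shear_prod_le μ _ ((map_mul_stripeWeight_le M σ hl (by linarith)).trans ?_) b
    refine Measure.le_iff'.2 fun S => ?_
    simp only [Measure.smul_apply, smul_eq_mul]
    gcongr
  have hpos : ∀ᵐ z ∂μ.prod (stripeWeight M σ), 0 < z.2 := by
    have h1 : ∀ᵐ t ∂stripeWeight M σ, 0 < t :=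
      (withDensity_absolutelyContinuous _ _).ae_le
        ((ae_restrict_mem measurableSet_Ioc).mono fun t ht => ht.1)
    exact Measure.quasiMeasurePreserving_snd.ae h1
  have := lintegral_le_of_map_le hTm hmap (g := fun z => ENNReal.ofReal (|v z| ^ p))
    (D := fun z => ENNReal.ofReal C * ENNReal.ofReal (|v (T z) - v z| ^ p))
    (q := ENNReal.ofReal q) (hDm.const_mul _) ?_ ?_
  · rwa [lintegral_const_mul _ hDm, ← mul_assoc] at this
  · intro z
    rw [← ENNReal.ofReal_mul hq0.le, ← ENNReal.ofReal_mul hC.le,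
      ← ENNReal.ofReal_add (by positivity) (by positivity)]
    exact ENNReal.ofReal_le_ofReal (hCle _ _)
  · filter_upwards [hpos] with z hz
    have hlim : Tendsto (fun n : ℕ => ENNReal.ofReal ((q * l ^ p) ^ n * (K * z.2) ^ p)) atTop
        (𝓝 0) := by
      rw [← ENNReal.ofReal_zero, ← zero_mul ((K * z.2) ^ p)]
      exact ENNReal.tendsto_ofReal
        ((tendsto_pow_atTop_nhds_zero_of_lt_one (by positivity) hlp).mul_const _)
    refine tendsto_of_tendsto_of_tendsto_of_le_of_le tendsto_const_nhds hlim
      (fun n => zero_le) fun n => ?_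
    have hKz : 0 ≤ K * z.2 := (abs_nonneg _).trans (hvK z.1 z.2 hz)
    dsimp only
    rw [← ENNReal.ofReal_pow hq0.le, ← ENNReal.ofReal_mul (by positivity), mul_pow, mul_assoc]
    gcongr
    calc |v (T^[n] z)| ^ p ≤ (l ^ n * (K * z.2)) ^ p := by
          refine Real.rpow_le_rpow (abs_nonneg _) ?_ hp0.le
          have := hvK (T^[n] z).1 (T^[n] z).2 (by rw [hiter]; positivity)
          rw [hiter n z] at this
          calc |v (T^[n] z)| = |v ((T^[n] z).1, l ^ n * z.2)| := by rw [← hiter n z]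
            _ ≤ _ := this
            _ = _ := by ring
      _ = (l ^ p) ^ n * (K * z.2) ^ p := by
          rw [Real.mul_rpow (by positivity) hKz, ← Real.rpow_natCast, ← Real.rpow_mul hl.le,
            ← Real.rpow_natCast, ← Real.rpow_mul hl.le, mul_comm p]

theorem lintegral_shear_parameters_le {E : Type*} [NormedAddCommGroup E] [NormedSpace ℝ E]
    [FiniteDimensional ℝ E] [MeasurableSpace E] [BorelSpace E] (μ : Measure E)
    [μ.IsAddHaarMeasure] {M ϑ : ℝ} (hϑ0 : 0 < ϑ) (hϑ1 : ϑ ≤ 1) (f : E → ℝ → ℝ≥0∞)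
    (x : E) {t : ℝ} (ht : t ∈ Set.Ioc 0 M) :
    ∫⁻ b in Metric.ball 0 (ϑ / 2), (∫⁻ l in Set.Icc (1 - ϑ / 2) (1 - ϑ / 4),
        f (x + t • b) (l * t)) ∂μ ≤
      ENNReal.ofReal (t ^ (Module.finrank ℝ E + 1))⁻¹ * ∫⁻ y, (∫⁻ r in
        Set.Ioc 0 M ∩ {r : ℝ | dist y x ^ 2 + (r - t) ^ 2 < (ϑ * t) ^ 2}, f y r) ∂μ := by
  obtain ⟨ht0, htM⟩ := ht
  set B : E → Set ℝ :=
    fun y => Set.Ioc 0 M ∩ {r : ℝ | dist y x ^ 2 + (r - t) ^ 2 < (ϑ * t) ^ 2} with hB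
  have hBm : ∀ y, MeasurableSet (B y) := fun y =>
    measurableSet_Ioc.inter (measurableSet_lt (by fun_prop) (by fun_prop))
  have hinner : ∀ y, ∫⁻ l, (B y).indicator (f y) (l * t) =
      ENNReal.ofReal t⁻¹ * ∫⁻ r in B y, f y r := by
    intro y
    have := lintegral_comp_add_smul volume ((B y).indicator (f y)) 0 ht0
    simp only [zero_add, smul_eq_mul, Module.finrank_self, pow_one] at this
    rw [← lintegral_indicator (hBm y), ← this]
    simp only [mul_comm]
  calc _ ≤ ∫⁻ b in Metric.ball 0 (ϑ / 2),
          (∫⁻ l, (B (x + t • b)).indicator (f (x + t • b)) (l * t)) ∂μ := by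
        refine setLIntegral_mono' measurableSet_ball fun b hb => ?_
        refine (setLIntegral_mono' measurableSet_Icc fun l hl => ?_).trans
          (setLIntegral_le_lintegral _ _)
        rw [Set.indicator_of_mem]
        refine ⟨⟨?_, ?_⟩, ?_⟩
        · have : 0 < l := by linarith [hl.1]
          positivity
        · nlinarith [hl.2]
        · rw [mem_ball_zero_iff] at hb
          have h1 : ‖b‖ ^ 2 ≤ (ϑ / 2) ^ 2 := by gcongr
          have h2 : (1 - l) ^ 2 ≤ (ϑ / 2) ^ 2 := by
            have := hl.1
            have := hl.2
            gcongr
            · linarith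
            · linarith
          have h3 : 0 < ϑ ^ 2 := by positivity
          have h4 : ‖b‖ ^ 2 + (1 - l) ^ 2 < ϑ ^ 2 := by nlinarith
          have h5 : dist (x + t • b) x = t * ‖b‖ := by
            rw [dist_self_add_left, norm_smul, Real.norm_of_nonneg ht0.le]
          show dist (x + t • b) x ^ 2 + (l * t - t) ^ 2 < (ϑ * t) ^ 2
          rw [h5]
          calc _ = (‖b‖ ^ 2 + (1 - l) ^ 2) * t ^ 2 := by ring
            _ < ϑ ^ 2 * t ^ 2 := by gcongr
            _ = _ := by ring
    _ ≤ ∫⁻ b, (∫⁻ l, (B (x + t • b)).indicator (f (x + t • b)) (l * t)) ∂μ :=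
        setLIntegral_le_lintegral _ _
    _ = ∫⁻ b, (fun y => ENNReal.ofReal t⁻¹ * ∫⁻ r in B y, f y r) (x + t • b) ∂μ :=
        lintegral_congr fun b => hinner _
    _ = _ := by
        rw [lintegral_comp_add_smul μ (fun y => ENNReal.ofReal t⁻¹ * ∫⁻ r in B y, f y r) x ht0,
          lintegral_const_mul' _ _ ENNReal.ofReal_ne_top, ← mul_assoc,
          ← ENNReal.ofReal_mul (by positivity), pow_succ, mul_inv]

theorem lintegral_prod_stripeWeight {E : Type*} [MeasurableSpace E] (μ : Measure E) (M σ : ℝ)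
    {f : E × ℝ → ℝ≥0∞} (hf : Measurable f) :
    ∫⁻ z, f z ∂μ.prod (stripeWeight M σ) =
      ∫⁻ x, (∫⁻ t in Set.Ioc 0 M, ENNReal.ofReal (t ^ (-σ)) * f (x, t)) ∂μ := by
  rw [lintegral_prod _ hf.aemeasurable]
  exact lintegral_congr fun x => lintegral_stripeWeight M σ _

theorem exists_lintegral_rpow_div_le_localized {E : Type} [NormedAddCommGroup E]
    [NormedSpace ℝ E] [FiniteDimensional ℝ E] [MeasurableSpace E] [BorelSpace E] (μ : Measure E)
    [μ.IsAddHaarMeasure] {p σ ϑ : ℝ} (hp : 1 ≤ p) (hσ : 1 < σ) (hσp : σ ≤ p) (hϑ0 : 0 < ϑ)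
    (hϑ1 : ϑ ≤ 1) :
    ∃ C : ℝ≥0∞, C ≠ ⊤ ∧ ∀ (M K : ℝ) (v : E × ℝ → ℝ), Continuous v →
      (∀ x t, 0 < t → |v (x, t)| ≤ K * t) →
      ∫⁻ x, (∫⁻ t in Set.Ioc 0 M, ENNReal.ofReal (|v (x, t)| ^ p / t ^ σ)) ∂μ ≤
        C * ∫⁻ x, (∫⁻ t in Set.Ioc 0 M, ∫⁻ y, (∫⁻ r in
          Set.Ioc 0 M ∩ {r : ℝ | dist y x ^ 2 + (r - t) ^ 2 < (ϑ * t) ^ 2},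
          ENNReal.ofReal (|v (y, r) - v (x, t)| ^ p /
            (ϑ * t) ^ (((Module.finrank ℝ E + 1 : ℕ) : ℝ) + σ))) ∂μ) ∂μ := by
  obtain ⟨C₀, hC₀, hC₀le⟩ := exists_lintegral_rpow_le_shear (l₀ := 1 - ϑ / 4) hp hσ hσp
    (by linarith) (by linarith)
  set n := Module.finrank ℝ E + 1
  set π : Measure (E × ℝ) := (μ.restrict (Metric.ball 0 (ϑ / 2))).prod
    (volume.restrict (Set.Icc (1 - ϑ / 2) (1 - ϑ / 4))) with hπ
  have hπuniv : π Set.univ =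
      μ (Metric.ball 0 (ϑ / 2)) * volume (Set.Icc (1 - ϑ / 2) (1 - ϑ / 4)) := by
    rw [hπ, ← Set.univ_prod_univ, Measure.prod_prod, Measure.restrict_apply_univ,
      Measure.restrict_apply_univ]
  have hπ0 : π Set.univ ≠ 0 := by
    rw [hπuniv, Real.volume_Icc]
    refine mul_ne_zero (Metric.measure_ball_pos μ _ (by positivity)).ne' ?_
    rw [ENNReal.ofReal_ne_zero_iff]
    linarith
  have hπtop : π Set.univ ≠ ⊤ := by
    rw [hπuniv]
    exact ENNReal.mul_ne_top measure_ball_lt_top.ne (by simp)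
  refine ⟨(π Set.univ)⁻¹ * (C₀ * ENNReal.ofReal (ϑ ^ ((n : ℝ) + σ))),
    ENNReal.mul_ne_top (ENNReal.inv_ne_top.2 hπ0)
      (ENNReal.mul_ne_top hC₀ ENNReal.ofReal_ne_top), fun M K v hv hvK => ?_⟩
  set ν := μ.prod (stripeWeight M σ) with hν
  set D : E × ℝ → E × ℝ → ℝ≥0∞ := fun w z =>
    ENNReal.ofReal (|v (z.1 + z.2 • w.1, w.2 * z.2) - v z| ^ p) with hD
  have hp0 : 0 ≤ p := by linarith
  have hDm : Measurable (Function.uncurry D) := by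
    refine Continuous.measurable ?_
    simp only [hD, Function.uncurry_def]
    refine ENNReal.continuous_ofReal.comp (Continuous.rpow_const ?_ fun _ => Or.inr hp0)
    fun_prop
  have hvm : Measurable fun z => ENNReal.ofReal (|v z| ^ p) := by
    have := hv.measurable
    fun_prop
  have hleft : ∫⁻ x, (∫⁻ t in Set.Ioc 0 M, ENNReal.ofReal (|v (x, t)| ^ p / t ^ σ)) ∂μ =
      ∫⁻ z, ENNReal.ofReal (|v z| ^ p) ∂ν := by
    rw [hν, lintegral_prod_stripeWeight μ M σ hvm]
    refine lintegral_congr fun x => setLIntegral_congr_fun measurableSet_Ioc fun t ht => ?_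
    have := ht.1
    rw [← ENNReal.ofReal_mul (by positivity), Real.rpow_neg this.le, div_eq_inv_mul]
  have hparam : ∀ᵐ w ∂π, ∫⁻ z, ENNReal.ofReal (|v z| ^ p) ∂ν ≤ C₀ * ∫⁻ z, D w z ∂ν := by
    have : ∀ᵐ l ∂volume.restrict (Set.Icc (1 - ϑ / 2) (1 - ϑ / 4)),
        l ∈ Set.Icc (1 - ϑ / 2) (1 - ϑ / 4) := ae_restrict_mem measurableSet_Icc
    have h2 : ∀ᵐ w ∂π, w.2 ∈ Set.Icc (1 - ϑ / 2) (1 - ϑ / 4) :=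
      Measure.quasiMeasurePreserving_snd.ae this
    filter_upwards [h2] with w hw
    exact hC₀le μ M K v hv hvK w.1 w.2 (by linarith [hw.1]) hw.2
  have hswap : π Set.univ * ∫⁻ z, ENNReal.ofReal (|v z| ^ p) ∂ν ≤
      C₀ * ∫⁻ z, (∫⁻ w, D w z ∂π) ∂ν := by
    calc _ = ∫⁻ _, (∫⁻ z, ENNReal.ofReal (|v z| ^ p) ∂ν) ∂π := by
          rw [lintegral_const, mul_comm]
      _ ≤ ∫⁻ w, C₀ * (∫⁻ z, D w z ∂ν) ∂π := lintegral_mono_ae hparam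
      _ = C₀ * ∫⁻ z, (∫⁻ w, D w z ∂π) ∂ν := by
          rw [lintegral_const_mul' _ _ hC₀, lintegral_lintegral_swap hDm.aemeasurable]
  have hmain : ∫⁻ z, (∫⁻ w, D w z ∂π) ∂ν ≤ ENNReal.ofReal (ϑ ^ ((n : ℝ) + σ)) *
      ∫⁻ x, (∫⁻ t in Set.Ioc 0 M, ∫⁻ y, (∫⁻ r in
          Set.Ioc 0 M ∩ {r : ℝ | dist y x ^ 2 + (r - t) ^ 2 < (ϑ * t) ^ 2},
          ENNReal.ofReal (|v (y, r) - v (x, t)| ^ p / (ϑ * t) ^ ((n : ℝ) + σ))) ∂μ) ∂μ := by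
    rw [hν, lintegral_prod_stripeWeight μ M σ hDm.lintegral_prod_left,
      ← lintegral_const_mul' _ _ ENNReal.ofReal_ne_top]
    refine lintegral_mono fun x => ?_
    rw [← lintegral_const_mul' _ _ ENNReal.ofReal_ne_top]
    refine setLIntegral_mono' measurableSet_Ioc fun t ht => ?_
    have ht0 := ht.1
    have hw : ∫⁻ w, D w (x, t) ∂π ≤ ENNReal.ofReal (t ^ n)⁻¹ * ∫⁻ y, (∫⁻ r in
        Set.Ioc 0 M ∩ {r : ℝ | dist y x ^ 2 + (r - t) ^ 2 < (ϑ * t) ^ 2},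
        ENNReal.ofReal (|v (y, r) - v (x, t)| ^ p)) ∂μ := by
      have hDx : Measurable fun w => D w (x, t) := hDm.of_uncurry_right
      rw [hπ, lintegral_prod _ hDx.aemeasurable]
      exact lintegral_shear_parameters_le μ hϑ0 hϑ1
        (fun y r => ENNReal.ofReal (|v (y, r) - v (x, t)| ^ p)) x ht
    refine (mul_le_mul_right hw _).trans ?_
    rw [← mul_assoc, ← ENNReal.ofReal_mul (by positivity)]
    have hcoef : t ^ (-σ) * (t ^ n)⁻¹ = ϑ ^ ((n : ℝ) + σ) * ((ϑ * t) ^ ((n : ℝ) + σ))⁻¹ := by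
      rw [Real.mul_rpow hϑ0.le ht0.le, mul_inv, ← mul_assoc,
        mul_inv_cancel₀ (Real.rpow_pos_of_pos hϑ0 _).ne', one_mul, Real.rpow_add ht0,
        Real.rpow_natCast, Real.rpow_neg ht0.le, mul_inv, mul_comm]
    rw [hcoef, ENNReal.ofReal_mul (by positivity), mul_assoc]
    refine mul_le_mul_right (le_of_eq ?_) _
    rw [← lintegral_const_mul' _ _ ENNReal.ofReal_ne_top]
    refine lintegral_congr fun y => ?_
    rw [← lintegral_const_mul' _ _ ENNReal.ofReal_ne_top]
    refine lintegral_congr fun r => ?_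
    rw [← ENNReal.ofReal_mul (by positivity), div_eq_inv_mul]
  rw [hleft, mul_assoc, ← ENNReal.mul_le_iff_le_inv hπ0 hπtop, mul_assoc]
  exact hswap.trans (mul_le_mul_right hmain _)

/-- Nonlocal Hardy-type inequality on the stripe `ℝ^{d-1} × (0,M]`: for Lipschitz
`u` vanishing on the bottom boundary, the weighted `L^p` norm with weight
`x_d^{-ps}` is controlled by the localized nonlocal seminorm, with a constant
independent of `M`. -/
theorem stmt_10 (d : ℕ) (hd : 2 ≤ d) (p s ϑ : ℝ) (hp : 1 ≤ p) (hs0 : 0 < s)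
    (hs1 : s ≤ 1) (hsp : 1 < s * p) (hϑ0 : 0 < ϑ) (hϑ1 : ϑ ≤ 1) :
    ∃ C : ℝ, 0 < C ∧ ∀ (M : ℝ), 0 < M →
      ∀ (u : EuclideanSpace ℝ (Fin (d - 1)) → ℝ → ℝ) (K : NNReal),
        LipschitzOnWith K (fun q : EuclideanSpace ℝ (Fin (d - 1)) × ℝ => u q.1 q.2)
          {q : EuclideanSpace ℝ (Fin (d - 1)) × ℝ | q.2 ∈ Set.Icc 0 M} →
        stripeSemi d (Set.Ioc 0 M) ϑ p s u ≠ ⊤ →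
        (∀ x' : EuclideanSpace ℝ (Fin (d - 1)), u x' 0 = 0) →
        (∫⁻ x' : EuclideanSpace ℝ (Fin (d - 1)), ∫⁻ xd in Set.Ioc (0:ℝ) M,
            ENNReal.ofReal (|u x' xd| ^ p / xd ^ (p * s))) ≤
          ENNReal.ofReal (C ^ p) * stripeSemi d (Set.Ioc 0 M) ϑ p s u := by
  have hp0 : 0 < p := by linarith
  obtain ⟨C₀, hC₀, hC₀le⟩ := exists_lintegral_rpow_div_le_localized
    (volume : Measure (EuclideanSpace ℝ (Fin (d - 1)))) (p := p) (σ := p * s) hp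
    (by linarith) (by nlinarith) hϑ0 hϑ1
  refine ⟨(C₀.toReal + 1) ^ (1 / p), by positivity, fun M hM u K hu _ hu0 => ?_⟩
  have hC : C₀ ≤ ENNReal.ofReal (((C₀.toReal + 1) ^ (1 / p)) ^ p) := by
    rw [← Real.rpow_mul (by positivity), one_div_mul_cancel hp0.ne', Real.rpow_one]
    exact ENNReal.le_ofReal_iff_toReal_le hC₀ (by positivity) |>.2 (by linarith)
  set v : EuclideanSpace ℝ (Fin (d - 1)) × ℝ → ℝ :=
    fun z => u z.1 (Set.projIcc 0 M hM.le z.2) with hv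
  have hvc : Continuous v := by
    have h1 : Continuous fun z : EuclideanSpace ℝ (Fin (d - 1)) × ℝ =>
        (z.1, (Set.projIcc 0 M hM.le z.2 : ℝ)) := by fun_prop
    exact hu.continuousOn.comp_continuous h1 fun z => (Set.projIcc 0 M hM.le z.2).2
  have hveq : ∀ x t, t ∈ Set.Ioc 0 M → v (x, t) = u x t := fun x t ht => by
    simp only [hv, Set.projIcc_of_mem hM.le (Set.Ioc_subset_Icc_self ht)]
  have hvK : ∀ x t, 0 < t → |v (x, t)| ≤ K * t := by
    intro x t ht
    have hm := (Set.projIcc 0 M hM.le t).2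
    have h := hu.dist_le_mul (x, (Set.projIcc 0 M hM.le t : ℝ)) hm (x, (0 : ℝ)) ⟨le_rfl, hM.le⟩
    simp only [hu0, dist_prod_same_left, Real.dist_eq, sub_zero, abs_of_nonneg hm.1] at h
    refine h.trans (mul_le_mul_of_nonneg_left ?_ K.2)
    rw [Set.coe_projIcc]
    exact max_le ht.le (min_le_right _ _)
  have hdim : ((Module.finrank ℝ (EuclideanSpace ℝ (Fin (d - 1))) + 1 : ℕ) : ℝ) = d := by
    rw [finrank_euclideanSpace_fin, Nat.sub_add_cancel (by omega)]
  have hmain := hC₀le M K v hvc hvK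
  rw [hdim] at hmain
  have hmeas : ∀ (x y : EuclideanSpace ℝ (Fin (d - 1))) (t : ℝ), MeasurableSet
      (Set.Ioc 0 M ∩ {r : ℝ | dist y x ^ 2 + (r - t) ^ 2 < (ϑ * t) ^ 2}) := fun x y t =>
    measurableSet_Ioc.inter (measurableSet_lt (by fun_prop) (by fun_prop))
  calc _ = ∫⁻ x, ∫⁻ t in Set.Ioc 0 M, ENNReal.ofReal (|v (x, t)| ^ p / t ^ (p * s)) :=
        lintegral_congr fun x => setLIntegral_congr_fun measurableSet_Ioc fun t ht => by
          rw [hveq x t ht]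
    _ ≤ _ := hmain
    _ = C₀ * stripeSemi d (Set.Ioc 0 M) ϑ p s u := by
        congr 1
        refine lintegral_congr fun x => setLIntegral_congr_fun measurableSet_Ioc fun t ht => ?_
        refine lintegral_congr fun y => setLIntegral_congr_fun (hmeas x y t) fun r hr => ?_
        rw [hveq x t ht, hveq y r hr.1]
    _ ≤ _ := mul_le_mul_left hC _
end

section
/- Let d ≥ 2, p ≥ 1, s ∈ (0,1) with sp > 1. There exists C = C(d, p, s), independent of ϑ, such that for all ϑ ∈ (0,1], all M > 0, and all Lipschitz u on the closure of ℝ^d_{M+} with u(·, 0) = 0, ∫_{ℝ^d_{M+}} |u(x)|^p / x_d^{ps} dx ≤ C ( ϑ^{ps-p} |u|^p_{𝔚^{s,p}_ϑ(ℝ^d_{M+})} + M^{-ps} ‖u‖^p_{L^p(ℝ^d_{M+})} ). -/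
open MeasureTheory
open scoped ENNReal NNReal

/-- The `L^p` norm (to the `p`-th power) on the stripe `ℝ^{d-1} × (0,M]`. -/
noncomputable def stripeLp (d : ℕ) (S : Set ℝ) (p : ℝ)
    (u : EuclideanSpace ℝ (Fin (d - 1)) → ℝ → ℝ) : ℝ≥0∞ :=
  ∫⁻ x' : EuclideanSpace ℝ (Fin (d - 1)), ∫⁻ xd in S, ENNReal.ofReal (|u x' xd| ^ p)

theorem lintegral_rpow_le_of_le_add_of_contraction {α : Type*} [MeasurableSpace α] {μ : Measure α}
    {p ρ c : ℝ} (hp : 1 ≤ p) (hρ : 0 ≤ ρ) (hc : 0 < c) (hρc : ρ + c ≤ 1) {f g h : α → ℝ≥0∞}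
    (hg : Measurable g) (hh : Measurable h) (hfgh : ∀ a, f a ≤ g a + h a)
    (hgf : ∫⁻ a, g a ^ p ∂μ ≤ ENNReal.ofReal (ρ ^ p) * ∫⁻ a, f a ^ p ∂μ)
    (hf : ∫⁻ a, f a ^ p ∂μ ≠ ∞) :
    ∫⁻ a, f a ^ p ∂μ ≤ ENNReal.ofReal (c ^ (-p)) * ∫⁻ a, h a ^ p ∂μ := by
  have hp0 : 0 < p := by linarith
  set F : ℝ≥0∞ := (∫⁻ a, f a ^ p ∂μ) ^ (1 / p) with hF
  set H : ℝ≥0∞ := (∫⁻ a, h a ^ p ∂μ) ^ (1 / p) with hH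
  have hFtop : F ≠ ∞ := ENNReal.rpow_ne_top_of_nonneg (by positivity) hf
  have hFp : F ^ p = ∫⁻ a, f a ^ p ∂μ := by
    rw [hF, ← ENNReal.rpow_mul, one_div_mul_cancel hp0.ne', ENNReal.rpow_one]
  have hHp : H ^ p = ∫⁻ a, h a ^ p ∂μ := by
    rw [hH, ← ENNReal.rpow_mul, one_div_mul_cancel hp0.ne', ENNReal.rpow_one]
  have hle : F ≤ ENNReal.ofReal ρ * F + H := by
    calc F ≤ (∫⁻ a, (g + h) a ^ p ∂μ) ^ (1 / p) := by
          refine ENNReal.rpow_le_rpow (lintegral_mono fun a => ?_) (by positivity)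
          exact ENNReal.rpow_le_rpow (hfgh a) hp0.le
      _ ≤ (∫⁻ a, g a ^ p ∂μ) ^ (1 / p) + H :=
          ENNReal.lintegral_Lp_add_le hg.aemeasurable hh.aemeasurable hp
      _ ≤ (ENNReal.ofReal (ρ ^ p) * ∫⁻ a, f a ^ p ∂μ) ^ (1 / p) + H := by
          gcongr
      _ = ENNReal.ofReal ρ * F + H := by
          rw [ENNReal.mul_rpow_of_nonneg _ _ (by positivity),
            ENNReal.ofReal_rpow_of_nonneg (by positivity) (by positivity), ← Real.rpow_mul hρ,
            mul_one_div_cancel hp0.ne', Real.rpow_one]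
  have hcF : ENNReal.ofReal c * F ≤ H := by
    refine (ENNReal.add_le_add_iff_left (a := ENNReal.ofReal ρ * F)
      (ENNReal.mul_ne_top ENNReal.ofReal_ne_top hFtop)).1 (le_trans ?_ hle)
    rw [← add_mul, ← ENNReal.ofReal_add hρ hc.le]
    calc _ ≤ ENNReal.ofReal 1 * F := by gcongr
      _ = F := by simp
  have hpow := ENNReal.rpow_le_rpow hcF hp0.le
  rw [ENNReal.mul_rpow_of_nonneg _ _ hp0.le, hFp, hHp, ENNReal.ofReal_rpow_of_pos hc] at hpow
  calc ∫⁻ a, f a ^ p ∂μ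
      = ENNReal.ofReal (c ^ (-p)) * (ENNReal.ofReal (c ^ p) * ∫⁻ a, f a ^ p ∂μ) := by
        rw [← mul_assoc, ← ENNReal.ofReal_mul (by positivity), ← Real.rpow_add hc]
        simp
    _ ≤ _ := by gcongr

section

variable {E : Type*} [NormedAddCommGroup E] [NormedSpace ℝ E]

/-- An integrable weight on `E` which is almost invariant under translations. -/
noncomputable def slowWeight (E : Type*) [NormedAddCommGroup E] [NormedSpace ℝ E] (η : ℝ)
    (x : E) : ℝ :=
  (1 + η * ‖x‖) ^ (-((Module.finrank ℝ E : ℝ) + 1))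

theorem slowWeight_nonneg {η : ℝ} (hη : 0 ≤ η) (x : E) : 0 ≤ slowWeight E η x := by
  unfold slowWeight; positivity

theorem slowWeight_le_one {η : ℝ} (hη : 0 ≤ η) (x : E) : slowWeight E η x ≤ 1 :=
  Real.rpow_le_one_of_one_le_of_nonpos (by have := norm_nonneg x; nlinarith [mul_nonneg hη this])
    (by have : (0 : ℝ) ≤ Module.finrank ℝ E := by positivity
        linarith)

theorem measurable_slowWeight [MeasurableSpace E] [BorelSpace E] (η : ℝ) :
    Measurable (slowWeight E η) := by
  unfold slowWeight; fun_prop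

theorem slowWeight_le_mul_slowWeight_add {η L : ℝ} (hη : 0 ≤ η) (x : E) {y : E} (hy : ‖y‖ ≤ L) :
    slowWeight E η x ≤
      (1 + η * L) ^ ((Module.finrank ℝ E : ℝ) + 1) * slowWeight E η (x + y) := by
  have hL : 0 ≤ L := (norm_nonneg y).trans hy
  have h1 : 1 + η * ‖x + y‖ ≤ (1 + η * L) * (1 + η * ‖x‖) := by
    have := mul_le_mul_of_nonneg_left (norm_add_le x y) hη
    have := mul_le_mul_of_nonneg_left hy hη
    have : 0 ≤ η * L * (η * ‖x‖) := by positivity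
    nlinarith
  have h2 := Real.rpow_le_rpow (by positivity) h1
    (by positivity : (0 : ℝ) ≤ (Module.finrank ℝ E : ℝ) + 1)
  rw [Real.mul_rpow (by positivity) (by positivity)] at h2
  unfold slowWeight
  rw [Real.rpow_neg (by positivity), Real.rpow_neg (by positivity), ← div_eq_mul_inv,
    le_div_iff₀ (by positivity), inv_mul_le_iff₀ (by positivity)]
  linarith

theorem tendsto_slowWeight (x : E) :
    Filter.Tendsto (fun η : ℝ => slowWeight E η x) (nhdsWithin 0 (Set.Ioi 0)) (nhds 1) := by
  have : ContinuousAt (fun η : ℝ => slowWeight E η x) 0 := by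
    unfold slowWeight
    refine ContinuousAt.rpow_const (by fun_prop) (Or.inl (by simp))
  have h := this.tendsto.mono_left (nhdsWithin_le_nhds (s := Set.Ioi 0))
  simpa [slowWeight] using h

end

theorem lintegral_mul_le_of_forall_weight {α : Type*} [MeasurableSpace α] {μ : Measure α}
    {W : ℝ → α → ℝ≥0∞} {F : α → ℝ≥0∞} {C : ℝ≥0∞}
    (hW : ∀ η, Measurable (W η)) (hF : Measurable F)
    (hlim : ∀ a, Filter.Tendsto (fun η => W η a * F a) (nhdsWithin 0 (Set.Ioi 0)) (nhds (F a)))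
    (hC : ∀ᶠ η in nhdsWithin 0 (Set.Ioi 0), ∫⁻ a, W η a * F a ∂μ ≤ C) :
    ∫⁻ a, F a ∂μ ≤ C := by
  calc ∫⁻ a, F a ∂μ
      = ∫⁻ a, Filter.liminf (fun η => W η a * F a) (nhdsWithin 0 (Set.Ioi 0)) ∂μ := by
        simp_rw [(hlim _).liminf_eq]
    _ ≤ Filter.liminf (fun η => ∫⁻ a, W η a * F a ∂μ) (nhdsWithin 0 (Set.Ioi 0)) :=
        lintegral_liminf_le fun η => (hW η).mul hF
    _ ≤ C := Filter.liminf_le_of_frequently_le' hC.frequently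

section

variable {E : Type*} [NormedAddCommGroup E] [NormedSpace ℝ E] [FiniteDimensional ℝ E]
  [MeasureSpace E] [BorelSpace E] [(volume : Measure E).IsAddHaarMeasure]

theorem lintegral_eq_ofReal_pow_mul_lintegral_comp_add_smul (x : E) {R : ℝ} (hR : 0 < R)
    (f : E → ℝ≥0∞) :
    ∫⁻ y, f y = ENNReal.ofReal (R ^ Module.finrank ℝ E) * ∫⁻ z, f (x + R • z) := by
  have h := lintegral_map_equiv (μ := (volume : Measure E)) (fun y => f (x + y))
    (Homeomorph.smulOfNeZero R hR.ne').toMeasurableEquiv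
  have h' : Measure.map (Homeomorph.smulOfNeZero R hR.ne').toMeasurableEquiv (volume : Measure E)
      = ENNReal.ofReal (abs (R ^ Module.finrank ℝ E)⁻¹) • volume :=
    Measure.map_addHaar_smul volume hR.ne'
  rw [h', lintegral_smul_measure, lintegral_add_left_eq_self f x] at h
  change _ = ∫⁻ z, f (x + R • z) at h
  rw [← h, smul_eq_mul, ← mul_assoc, ← ENNReal.ofReal_mul (by positivity),
    abs_of_pos (by positivity), mul_inv_cancel₀ (by positivity)]
  simp

theorem lintegral_comp_add_smul_mul_le {M β : ℝ} (hβ : 0 < β) (hβ1 : β ≤ 1) (z : E)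
    {G : E × ℝ → ℝ≥0∞} (hG : Measurable G) :
    ∫⁻ x : E, ∫⁻ t in Set.Ioc 0 M, G (x + t • z, β * t) ≤
      ENNReal.ofReal β⁻¹ * ∫⁻ x : E, ∫⁻ t in Set.Ioc 0 M, G (x, t) := by
  rw [lintegral_lintegral_swap (f := fun x t => G (x + t • z, β * t)) (by fun_prop),
    lintegral_lintegral_swap (f := fun x t => G (x, t)) (by fun_prop)]
  have key : ∀ t : ℝ, ∫⁻ x : E, G (x + t • z, β * t) = ∫⁻ x : E, G (x, β * t) := fun t =>
    lintegral_add_right_eq_self (fun x => G (x, β * t)) (t • z)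
  refine (lintegral_congr key).trans_le ?_
  set Φ : ℝ → ℝ≥0∞ := fun t => ∫⁻ x : E, G (x, t)
  change ∫⁻ t in Set.Ioc 0 M, Φ (β * t) ≤ ENNReal.ofReal β⁻¹ * ∫⁻ t in Set.Ioc 0 M, Φ t
  have h := lintegral_eq_ofReal_pow_mul_lintegral_comp_add_smul (0 : ℝ) hβ
    ((Set.Ioc 0 M).indicator Φ)
  rw [lintegral_indicator measurableSet_Ioc, Module.finrank_self, pow_one] at h
  rw [h, ← mul_assoc, ← ENNReal.ofReal_mul (by positivity), inv_mul_cancel₀ hβ.ne',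
    ENNReal.ofReal_one, one_mul, ← lintegral_indicator measurableSet_Ioc]
  refine lintegral_mono fun t => ?_
  by_cases ht : t ∈ Set.Ioc 0 M
  · have ht' : 0 + β • t ∈ Set.Ioc 0 M := by
      simp only [zero_add, smul_eq_mul]
      exact ⟨mul_pos hβ ht.1, by nlinarith [ht.1, ht.2]⟩
    rw [Set.indicator_of_mem ht, Set.indicator_of_mem ht']
    simp
  · simp [Set.indicator_of_notMem ht]

theorem lintegral_slowWeight_lt_top {η : ℝ} (hη : 0 < η) :
    ∫⁻ x : E, ENNReal.ofReal (slowWeight E η x) < ∞ := by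
  have h := lintegral_eq_ofReal_pow_mul_lintegral_comp_add_smul (0 : E) hη
    (fun x => ENNReal.ofReal ((1 + ‖x‖) ^ (-((Module.finrank ℝ E : ℝ) + 1))))
  have h1 := finite_integral_one_add_norm (E := E) (μ := volume)
    (r := (Module.finrank ℝ E : ℝ) + 1) (by linarith)
  rw [h] at h1
  have h2 := ENNReal.lt_top_of_mul_ne_top_right h1.ne (by simpa using pow_pos hη _)
  simpa [slowWeight, norm_smul, abs_of_pos hη] using h2

theorem mul_one_add_rpow_add_le_one {a ϑ ζ A : ℝ} (ha0 : 0 ≤ a) (ha1 : a ≤ 1) (hϑ : 0 < ϑ) (hϑ1 : ϑ ≤ 1)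
    (hζ : -1 < ζ) (hζ' : ζ ≤ -1 / 2) (hA : A ≤ 1 + a * ϑ / 4) :
    A * (1 + ϑ * ζ) ^ a + a * ϑ / 4 ≤ 1 := by
  have h0 : -1 ≤ ϑ * ζ := by nlinarith
  have h1 : (1 + ϑ * ζ) ^ a ≤ 1 + a * (ϑ * ζ) := rpow_one_add_le_one_add_mul_self h0 ha0 ha1
  have h2 : (1 + ϑ * ζ) ^ a ≤ 1 - a * ϑ / 2 := by nlinarith [mul_nonneg ha0 hϑ.le]
  have h3 : 0 ≤ (1 + ϑ * ζ) ^ a := Real.rpow_nonneg (by linarith) _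
  have h4 : 0 ≤ a * ϑ := by positivity
  nlinarith [mul_le_mul_of_nonneg_right hA h3, sq_nonneg (a * ϑ)]

theorem lintegral_weighted_lt_top {p s M K η : ℝ} (hp : 0 < p) (hs1 : s < 1) (hK : 0 ≤ K)
    (hη : 0 < η) {v : E × ℝ → ℝ} (hv : Continuous v)
    (hvK : ∀ x, ∀ t ∈ Set.Ioc 0 M, |v (x, t)| ≤ K * t) :
    ∫⁻ q : E × ℝ, ENNReal.ofReal (slowWeight E η q.1) * ENNReal.ofReal (|v q| ^ p / q.2 ^ (p * s))
      ∂(volume.prod (volume.restrict (Set.Ioc 0 M))) < ∞ := by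
  have hsw := measurable_slowWeight (E := E) η
  rw [lintegral_prod _ (by fun_prop)]
  calc _ ≤ ∫⁻ x : E, ∫⁻ t in Set.Ioc 0 M,
        ENNReal.ofReal (slowWeight E η x) * ENNReal.ofReal (K ^ p * M ^ (p - p * s)) := by
        refine lintegral_mono fun x => setLIntegral_mono' measurableSet_Ioc fun t ht => ?_
        gcongr
        rw [div_le_iff₀ (Real.rpow_pos_of_pos ht.1 _)]
        calc |v (x, t)| ^ p ≤ (K * t) ^ p :=
              Real.rpow_le_rpow (abs_nonneg _) (hvK x t ht) hp.le
          _ = K ^ p * t ^ (p - p * s) * t ^ (p * s) := by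
              rw [Real.mul_rpow hK ht.1.le, mul_assoc, ← Real.rpow_add ht.1, sub_add_cancel]
          _ ≤ _ := by
              have := ht.1
              gcongr
              · nlinarith
              · exact ht.2
    _ = (∫⁻ x : E, ENNReal.ofReal (slowWeight E η x)) *
          (ENNReal.ofReal (K ^ p * M ^ (p - p * s)) * volume (Set.Ioc 0 M)) := by
        simp_rw [setLIntegral_const, mul_assoc]
        rw [lintegral_mul_const _ (by fun_prop)]
    _ < ∞ := ENNReal.mul_lt_top (lintegral_slowWeight_lt_top hη)
        (ENNReal.mul_lt_top ENNReal.ofReal_lt_top (by simp))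

theorem lintegral_div_rpow_le_of_shear {p s ϑ M K ζ : ℝ} (hp : 1 ≤ p) (hs1 : s < 1)
    (hsp : 1 < s * p) (hϑ : 0 < ϑ) (hϑ1 : ϑ ≤ 1) (hK : 0 ≤ K) {v : E × ℝ → ℝ}
    (hv : Continuous v) (hvK : ∀ x, ∀ t ∈ Set.Ioc 0 M, |v (x, t)| ≤ K * t) {z : E}
    (hz : ‖z‖ ≤ 1) (hζ : -1 < ζ) (hζ' : ζ ≤ -1 / 2) :
    ∫⁻ q : E × ℝ, ENNReal.ofReal (|v q| ^ p / q.2 ^ (p * s))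
        ∂(volume.prod (volume.restrict (Set.Ioc 0 M))) ≤
      ENNReal.ofReal (((s - 1 / p) * ϑ / 4) ^ (-p)) * ∫⁻ q : E × ℝ,
        ENNReal.ofReal (|v (q.1 + (ϑ * q.2) • z, q.2 + ϑ * q.2 * ζ) - v q| ^ p / q.2 ^ (p * s))
        ∂(volume.prod (volume.restrict (Set.Ioc 0 M))) := by
  have hp0 : 0 < p := by linarith
  set a : ℝ := s - 1 / p with ha
  set r : ℝ := (Module.finrank ℝ E : ℝ) + 1 with hr
  set β : ℝ := 1 + ϑ * ζ with hβdef
  set ν : Measure (E × ℝ) := volume.prod (volume.restrict (Set.Ioc 0 M)) with hν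
  have ha0 : 0 < a := by
    rw [ha, sub_pos, div_lt_iff₀ hp0]; exact hsp
  have ha1 : a ≤ 1 := by
    have : 0 < 1 / p := by positivity
    linarith
  have hβ0 : 0 < β := by nlinarith
  have hβ1 : β ≤ 1 := by nlinarith
  let T : E × ℝ → E × ℝ := fun q => (q.1 + q.2 • (ϑ • z), β * q.2)
  have hT : ∀ q : E × ℝ, (q.1 + (ϑ * q.2) • z, q.2 + ϑ * q.2 * ζ) = T q := fun q => by
    simp only [T, hβdef, smul_smul, mul_comm ϑ q.2]
    congr 1
    ring
  have hTc : Continuous T := by fun_prop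
  simp_rw [hT]
  refine lintegral_mul_le_of_forall_weight
    (W := fun η q => ENNReal.ofReal (slowWeight E η q.1)) (fun η => ?_) (by fun_prop)
    (fun q => ?_) ?_
  · have := measurable_slowWeight (E := E) η
    fun_prop
  · have h1 := ENNReal.Tendsto.mul_const (b := ENNReal.ofReal (|v q| ^ p / q.2 ^ (p * s)))
      (ENNReal.tendsto_ofReal (tendsto_slowWeight q.1)) (Or.inl (by simp))
    simpa using h1
  have hsmall : ∀ᶠ η in nhdsWithin (0 : ℝ) (Set.Ioi 0),
      ((1 + η * M) ^ r) ^ (1 / p) ≤ 1 + a * ϑ / 4 := by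
    have hc : ContinuousAt (fun η : ℝ => ((1 + η * M) ^ r) ^ (1 / p)) 0 := by
      refine ContinuousAt.rpow_const (ContinuousAt.rpow_const (by fun_prop) ?_) ?_ <;>
      exact Or.inl (by simp)
    have h := hc.tendsto.mono_left (nhdsWithin_le_nhds (s := Set.Ioi 0))
    refine (h.eventually_lt_const (u := 1 + a * ϑ / 4) ?_).mono fun _ => le_of_lt
    simp only [zero_mul, add_zero, Real.one_rpow]
    have : 0 < a * ϑ := by positivity
    linarith
  filter_upwards [hsmall, self_mem_nhdsWithin] with η hηA hη
  have hη : 0 < η := hη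
  have hsw := measurable_slowWeight (E := E) η
  by_cases hM : M ≤ 0
  · simp [hν, Set.Ioc_eq_empty (not_lt.2 hM)]
  push Not at hM
  set A : ℝ := (1 + η * M) ^ r with hA
  have hA0 : 0 ≤ A := by positivity
  let w : E × ℝ → ℝ≥0∞ := fun q => ENNReal.ofReal (slowWeight E η q.1 * (q.2 ^ (p * s))⁻¹)
  have hw : Measurable w := by fun_prop
  have hconv : ∀ g : E × ℝ → ℝ, Measurable g →
      ∫⁻ q, ENNReal.ofReal |g q| ^ p ∂(ν.withDensity w) =
      ∫⁻ q, ENNReal.ofReal (slowWeight E η q.1) * ENNReal.ofReal (|g q| ^ p / q.2 ^ (p * s)) ∂ν := by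
    intro g hg
    rw [lintegral_withDensity_eq_lintegral_mul _ hw (by fun_prop)]
    refine lintegral_congr fun q => ?_
    simp only [Pi.mul_apply, w]
    rw [ENNReal.ofReal_rpow_of_nonneg (abs_nonneg _) hp0.le, ← ENNReal.ofReal_mul' (by positivity),
      ← ENNReal.ofReal_mul (slowWeight_nonneg hη.le _)]
    congr 1
    ring
  have hfin := lintegral_weighted_lt_top hp0 hs1 hK hη hv hvK
  have habs := lintegral_rpow_le_of_le_add_of_contraction (μ := ν.withDensity w)
    (ρ := A ^ (1 / p) * β ^ a) (c := a * ϑ / 4) (f := fun q => ENNReal.ofReal |v q|)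
    (g := fun q => ENNReal.ofReal |v (T q)|) (h := fun q => ENNReal.ofReal |v (T q) - v q|)
    hp (by positivity) (by positivity)
    (mul_one_add_rpow_add_le_one ha0.le ha1 hϑ hϑ1 hζ hζ' hηA) (by fun_prop) (by fun_prop) (fun q => ?_) ?_ ?_
  · rw [hconv v hv.measurable, hconv (fun q => v (T q) - v q) (by fun_prop)] at habs
    refine habs.trans ?_
    gcongr with q
    exact mul_le_of_le_one_left' (ENNReal.ofReal_le_one.2 (slowWeight_le_one hη.le _))
  · rw [← ENNReal.ofReal_add (abs_nonneg _) (abs_nonneg _)]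
    refine ENNReal.ofReal_le_ofReal ?_
    have := abs_sub (v (T q)) (v (T q) - v q)
    simpa using this
  · rw [hconv v hv.measurable, hconv (fun q => v (T q)) (by fun_prop), hν,
      lintegral_prod _ (by fun_prop), lintegral_prod _ (by fun_prop)]
    set G : E × ℝ → ℝ≥0∞ := fun q =>
      ENNReal.ofReal (slowWeight E η q.1) * ENNReal.ofReal (|v q| ^ p / q.2 ^ (p * s)) with hG
    have hGm : Measurable G := by fun_prop
    calc _ ≤ ∫⁻ x : E, ∫⁻ t in Set.Ioc 0 M, ENNReal.ofReal (A * β ^ (p * s)) *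
          G (x + t • (ϑ • z), β * t) := by
          refine lintegral_mono fun x => setLIntegral_mono' measurableSet_Ioc fun t ht => ?_
          have ht0 : 0 < t := ht.1
          have hnorm : ‖t • (ϑ • z)‖ ≤ M := by
            rw [norm_smul, norm_smul, Real.norm_of_nonneg ht0.le, Real.norm_of_nonneg hϑ.le]
            calc t * (ϑ * ‖z‖) ≤ t * (1 * 1) := by gcongr
              _ ≤ M := by linarith [ht.2]
          have hs := slowWeight_le_mul_slowWeight_add hη.le x hnorm
          have hsn := slowWeight_nonneg hη.le (x + t • (ϑ • z))
          simp only [hG, T]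
          rw [← ENNReal.ofReal_mul (slowWeight_nonneg hη.le _), ← ENNReal.ofReal_mul hsn,
            ← ENNReal.ofReal_mul (by positivity)]
          refine ENNReal.ofReal_le_ofReal ?_
          rw [Real.mul_rpow hβ0.le ht0.le]
          have hβp : 0 < β ^ (p * s) := by positivity
          calc _ ≤ A * slowWeight E η (x + t • (ϑ • z)) *
                (|v (x + t • (ϑ • z), β * t)| ^ p / t ^ (p * s)) := by gcongr
            _ = _ := by field_simp
      _ = ENNReal.ofReal (A * β ^ (p * s)) * ∫⁻ x : E, ∫⁻ t in Set.Ioc 0 M,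
          G (x + t • (ϑ • z), β * t) := by
          rw [← lintegral_const_mul _ (by fun_prop)]
          refine lintegral_congr fun x => ?_
          rw [lintegral_const_mul _ (by fun_prop)]
      _ ≤ ENNReal.ofReal (A * β ^ (p * s)) * (ENNReal.ofReal β⁻¹ *
          ∫⁻ x : E, ∫⁻ t in Set.Ioc 0 M, G (x, t)) := by
          gcongr
          exact lintegral_comp_add_smul_mul_le hβ0 hβ1 _ hGm
      _ = _ := by
          rw [← mul_assoc, ← ENNReal.ofReal_mul (by positivity)]
          congr 2
          rw [Real.mul_rpow (by positivity) (by positivity), ← Real.rpow_mul hA0,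
            one_div_mul_cancel hp0.ne', Real.rpow_one, ← Real.rpow_mul hβ0.le, mul_assoc,
            ← Real.rpow_neg_one, ← Real.rpow_add hβ0]
          congr 2
          rw [ha]
          field_simp
          ring
  · rw [hconv v hv.measurable]
    exact hfin.ne

theorem lintegral_shear_le_lintegral_ball {ϑ M R t : ℝ} (hR : R = ϑ * t) (hϑ : 0 < ϑ)
    (hϑ1 : ϑ ≤ 1) (ht : t ∈ Set.Ioc 0 M) (x : E) (F : E × ℝ → ℝ≥0∞) (hF : Measurable F) :
    ENNReal.ofReal (R ^ (Module.finrank ℝ E + 1)) *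
        ∫⁻ ξ : E × ℝ, F (x + R • ξ.1, t + R * ξ.2)
          ∂((volume.restrict (Metric.ball (0 : E) (1 / 2))).prod
            (volume.restrict (Set.Ioo (-3 / 4 : ℝ) (-1 / 2)))) ≤
      ∫⁻ y : E, ∫⁻ τ in Set.Ioc 0 M ∩ {τ : ℝ | dist y x ^ 2 + (τ - t) ^ 2 < R ^ 2}, F (y, τ) := by
  obtain ⟨ht0, htM⟩ := ht
  have hR0 : 0 < R := by rw [hR]; positivity
  have hRt : R ≤ t := by rw [hR]; nlinarith
  rw [lintegral_prod _ (by fun_prop),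
    lintegral_eq_ofReal_pow_mul_lintegral_comp_add_smul x hR0, pow_succ,
    ENNReal.ofReal_mul (by positivity), mul_assoc, ← lintegral_const_mul _ (by fun_prop),
    ← lintegral_indicator Metric.isOpen_ball.measurableSet]
  refine mul_le_mul' le_rfl (lintegral_mono fun z => ?_)
  refine Set.indicator_apply_le' (fun hz => ?_) fun _ => zero_le
  rw [mem_ball_zero_iff] at hz
  have hscale := lintegral_eq_ofReal_pow_mul_lintegral_comp_add_smul t hR0
    ((Set.Ioc 0 M ∩ {τ : ℝ | dist (x + R • z) x ^ 2 + (τ - t) ^ 2 < R ^ 2}).indicator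
      fun τ => F (x + R • z, τ))
  rw [lintegral_indicator (by measurability), Module.finrank_self, pow_one] at hscale
  rw [hscale, ← lintegral_indicator measurableSet_Ioo]
  refine mul_le_mul' le_rfl (lintegral_mono fun ζ => ?_)
  refine Set.indicator_apply_le' (fun hζ => ?_) fun _ => zero_le
  obtain ⟨h1, h2⟩ := hζ
  rw [Set.indicator_of_mem, smul_eq_mul]
  refine ⟨⟨?_, ?_⟩, ?_⟩
  · simp only [smul_eq_mul]; nlinarith
  · simp only [smul_eq_mul]; nlinarith
  · simp only [Set.mem_ofPred_eq, dist_self_add_left, norm_smul, Real.norm_of_nonneg hR0.le,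
      smul_eq_mul, add_sub_cancel_left, mul_pow]
    have h3 : ‖z‖ ^ 2 < 1 / 4 := by nlinarith [norm_nonneg z]
    have h4 : ζ ^ 2 < 9 / 16 := by nlinarith
    have h5 : 0 < R ^ 2 := by positivity
    nlinarith

theorem lintegral_shear_le_stripe {p s ϑ M : ℝ} (hϑ : 0 < ϑ) (hϑ1 : ϑ ≤ 1) {v : E × ℝ → ℝ}
    (hv : Continuous v) :
    ENNReal.ofReal (ϑ ^ (-(p * s))) * ∫⁻ ξ : E × ℝ, ∫⁻ q : E × ℝ,
        ENNReal.ofReal (|v (q.1 + (ϑ * q.2) • ξ.1, q.2 + ϑ * q.2 * ξ.2) - v q| ^ p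
          / q.2 ^ (p * s)) ∂(volume.prod (volume.restrict (Set.Ioc 0 M)))
        ∂((volume.restrict (Metric.ball (0 : E) (1 / 2))).prod
            (volume.restrict (Set.Ioo (-3 / 4 : ℝ) (-1 / 2)))) ≤
      ∫⁻ x : E, ∫⁻ t in Set.Ioc 0 M, ∫⁻ y : E,
        ∫⁻ τ in Set.Ioc 0 M ∩ {τ : ℝ | dist y x ^ 2 + (τ - t) ^ 2 < (ϑ * t) ^ 2},
          ENNReal.ofReal (|v (y, τ) - v (x, t)| ^ p /
            (ϑ * t) ^ ((Module.finrank ℝ E : ℝ) + 1 + p * s)) := by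
  rw [lintegral_lintegral_swap (by fun_prop), ← lintegral_const_mul _ (by fun_prop),
    lintegral_prod _ (by fun_prop)]
  refine lintegral_mono fun x => setLIntegral_mono' measurableSet_Ioc fun t ht => ?_
  have ht0 : 0 < t := ht.1
  have hR0 : 0 < ϑ * t := by positivity
  refine le_trans (le_of_eq ?_) (lintegral_shear_le_lintegral_ball rfl hϑ hϑ1 ht x
    (fun q => ENNReal.ofReal (|v q - v (x, t)| ^ p /
            (ϑ * t) ^ ((Module.finrank ℝ E : ℝ) + 1 + p * s))) (by fun_prop))
  rw [← lintegral_const_mul _ (by fun_prop), ← lintegral_const_mul _ (by fun_prop)]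
  refine lintegral_congr fun ξ => ?_
  rw [← ENNReal.ofReal_mul (by positivity), ← ENNReal.ofReal_mul (by positivity)]
  congr 1
  have h1 : (ϑ * t) ^ ((Module.finrank ℝ E : ℝ) + 1 + p * s) =
      (ϑ * t) ^ (Module.finrank ℝ E + 1) * (ϑ ^ (p * s) * t ^ (p * s)) := by
    rw [Real.rpow_add hR0, ← Real.mul_rpow hϑ.le ht0.le, ← Real.rpow_natCast]
    push_cast
    rfl
  rw [h1, Real.rpow_neg hϑ.le]
  field_simp

theorem lintegral_div_rpow_le_stripe {p s ϑ M K : ℝ} (hp : 1 ≤ p) (hs1 : s < 1)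
    (hsp : 1 < s * p) (hϑ : 0 < ϑ) (hϑ1 : ϑ ≤ 1) (hK : 0 ≤ K) {v : E × ℝ → ℝ}
    (hv : Continuous v) (hvK : ∀ x, ∀ t ∈ Set.Ioc 0 M, |v (x, t)| ≤ K * t) :
    ∫⁻ x : E, ∫⁻ t in Set.Ioc 0 M, ENNReal.ofReal (|v (x, t)| ^ p / t ^ (p * s)) ≤
      ENNReal.ofReal ((volume (Metric.ball (0 : E) (1 / 2))).toReal⁻¹ * 4 *
        ((s - 1 / p) / 4) ^ (-p)) * (ENNReal.ofReal (ϑ ^ (p * s - p)) *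
      ∫⁻ x : E, ∫⁻ t in Set.Ioc 0 M, ∫⁻ y : E,
        ∫⁻ τ in Set.Ioc 0 M ∩ {τ : ℝ | dist y x ^ 2 + (τ - t) ^ 2 < (ϑ * t) ^ 2},
          ENNReal.ofReal (|v (y, τ) - v (x, t)| ^ p /
            (ϑ * t) ^ ((Module.finrank ℝ E : ℝ) + 1 + p * s))) := by
  have hp0 : 0 < p := by linarith
  have ha0 : 0 < s - 1 / p := by
    rw [sub_pos, div_lt_iff₀ hp0]; exact hsp
  have hb : 0 < (volume (Metric.ball (0 : E) (1 / 2))).toReal :=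
    ENNReal.toReal_pos (Metric.measure_ball_pos _ _ (by norm_num)).ne' measure_ball_lt_top.ne
  have hshear := lintegral_shear_le_stripe (M := M) (p := p) (s := s) hϑ hϑ1 hv
  set b : ℝ := (volume (Metric.ball (0 : E) (1 / 2))).toReal with hbdef
  set a : ℝ := s - 1 / p
  set κ : Measure (E × ℝ) := (volume.restrict (Metric.ball (0 : E) (1 / 2))).prod
    (volume.restrict (Set.Ioo (-3 / 4 : ℝ) (-1 / 2))) with hκ
  set Semi := ∫⁻ x : E, ∫⁻ t in Set.Ioc 0 M, ∫⁻ y : E,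
        ∫⁻ τ in Set.Ioc 0 M ∩ {τ : ℝ | dist y x ^ 2 + (τ - t) ^ 2 < (ϑ * t) ^ 2},
          ENNReal.ofReal (|v (y, τ) - v (x, t)| ^ p /
            (ϑ * t) ^ ((Module.finrank ℝ E : ℝ) + 1 + p * s))
  set D : E × ℝ → ℝ≥0∞ := fun ξ => ∫⁻ q : E × ℝ,
        ENNReal.ofReal (|v (q.1 + (ϑ * q.2) • ξ.1, q.2 + ϑ * q.2 * ξ.2) - v q| ^ p
          / q.2 ^ (p * s)) ∂(volume.prod (volume.restrict (Set.Ioc 0 M))) with hD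
  have hDm : Measurable D := by fun_prop
  rw [← lintegral_prod (fun q : E × ℝ => ENNReal.ofReal (|v q| ^ p / q.2 ^ (p * s)))
    (by fun_prop)]
  set N := ∫⁻ q : E × ℝ, ENNReal.ofReal (|v q| ^ p / q.2 ^ (p * s))
        ∂(volume.prod (volume.restrict (Set.Ioc 0 M)))
  have hκuniv : κ Set.univ = ENNReal.ofReal (b / 4) := by
    rw [hκ, ← Set.univ_prod_univ, Measure.prod_prod, Measure.restrict_apply_univ,
      Measure.restrict_apply_univ, Real.volume_Ioo, ← ENNReal.ofReal_toReal
        (measure_ball_lt_top (μ := (volume : Measure E)) (x := 0) (r := 1 / 2)).ne,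
      ← ENNReal.ofReal_mul hb.le]
    congr 1
    ring
  have hND : N * ENNReal.ofReal (b / 4) ≤
      ENNReal.ofReal ((a * ϑ / 4) ^ (-p)) * ∫⁻ ξ, D ξ ∂κ := by
    rw [← hκuniv, ← lintegral_const, ← lintegral_const_mul _ hDm, hκ, Measure.prod_restrict]
    refine setLIntegral_mono' (measurableSet_ball.prod measurableSet_Ioo) fun ξ hξ => ?_
    obtain ⟨h1, h2, h3⟩ := hξ
    rw [mem_ball_zero_iff] at h1
    exact lintegral_div_rpow_le_of_shear hp hs1 hsp hϑ hϑ1 hK hv hvK (by linarith)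
      (by linarith) h3.le
  calc N = ENNReal.ofReal (b⁻¹ * 4) * (N * ENNReal.ofReal (b / 4)) := by
        rw [mul_comm N, ← mul_assoc, ← ENNReal.ofReal_mul (by positivity)]
        field_simp
        simp
    _ ≤ ENNReal.ofReal (b⁻¹ * 4) *
          (ENNReal.ofReal ((a * ϑ / 4) ^ (-p)) * ∫⁻ ξ, D ξ ∂κ) := by gcongr
    _ = ENNReal.ofReal (b⁻¹ * 4 * (a / 4) ^ (-p)) * (ENNReal.ofReal (ϑ ^ (p * s - p)) *
          (ENNReal.ofReal (ϑ ^ (-(p * s))) * ∫⁻ ξ, D ξ ∂κ)) := by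
        simp only [← mul_assoc]
        rw [← ENNReal.ofReal_mul (by positivity), ← ENNReal.ofReal_mul (by positivity),
          ← ENNReal.ofReal_mul (by positivity)]
        congr 2
        rw [show a * ϑ / 4 = a / 4 * ϑ by ring, Real.mul_rpow (by positivity) hϑ.le,
          mul_assoc _ (ϑ ^ (p * s - p)), ← Real.rpow_add hϑ]
        ring_nf
    _ ≤ _ := by gcongr

end

/-- Nonlocal Hardy-type inequality on the stripe with explicit dependence
`ϑ^{ps-p}` on the horizon parameter; the constant `C` is independent of `ϑ`
and `M`. -/
theorem stmt_11 (d : ℕ) (hd : 2 ≤ d) (p s : ℝ) (hp : 1 ≤ p) (hs0 : 0 < s)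
    (hs1 : s < 1) (hsp : 1 < s * p) :
    ∃ C : ℝ, 0 < C ∧ ∀ (ϑ : ℝ), 0 < ϑ → ϑ ≤ 1 → ∀ (M : ℝ), 0 < M →
      ∀ (u : EuclideanSpace ℝ (Fin (d - 1)) → ℝ → ℝ) (K : NNReal),
        LipschitzOnWith K (fun q : EuclideanSpace ℝ (Fin (d - 1)) × ℝ => u q.1 q.2)
          {q : EuclideanSpace ℝ (Fin (d - 1)) × ℝ | q.2 ∈ Set.Icc 0 M} →
        (∀ x' : EuclideanSpace ℝ (Fin (d - 1)), u x' 0 = 0) →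
        (∫⁻ x' : EuclideanSpace ℝ (Fin (d - 1)), ∫⁻ xd in Set.Ioc (0:ℝ) M,
            ENNReal.ofReal (|u x' xd| ^ p / xd ^ (p * s))) ≤
          ENNReal.ofReal C *
            (ENNReal.ofReal (ϑ ^ (p * s - p)) * stripeSemi d (Set.Ioc 0 M) ϑ p s u +
              ENNReal.ofReal (M ^ (-(p * s))) * stripeLp d (Set.Ioc 0 M) p u) := by
  have hp0 : 0 < p := by linarith
  set b : ℝ := (volume (Metric.ball (0 : EuclideanSpace ℝ (Fin (d - 1))) (1 / 2))).toReal
  have hb0 : 0 < b :=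
    ENNReal.toReal_pos (Metric.measure_ball_pos _ _ (by norm_num)).ne' measure_ball_lt_top.ne
  have ha0 : 0 < s - 1 / p := by
    rw [sub_pos, div_lt_iff₀ hp0]; exact hsp
  refine ⟨b⁻¹ * 4 * ((s - 1 / p) / 4) ^ (-p), by positivity, ?_⟩
  intro ϑ hϑ hϑ1 M hM u K hu hu0
  obtain ⟨v, hv, huv⟩ := hu.extend_real
  have huv' : ∀ x, ∀ t ∈ Set.Ioc 0 M, u x t = v (x, t) := fun x t ht =>
    huv (x := (x, t)) (Set.Ioc_subset_Icc_self ht)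
  have hvK : ∀ x, ∀ t ∈ Set.Ioc 0 M, |v (x, t)| ≤ (K : ℝ) * t := by
    intro x t ht
    have h0 : v (x, 0) = 0 := by
      rw [← huv (x := (x, 0)) ⟨le_rfl, hM.le⟩]
      exact hu0 x
    have h := hv.dist_le_mul (x, t) (x, 0)
    rw [h0, Real.dist_eq, sub_zero, Prod.dist_eq, dist_self, Real.dist_eq, sub_zero,
      abs_of_pos ht.1, max_eq_right ht.1.le] at h
    exact h
  have hdim : (Module.finrank ℝ (EuclideanSpace ℝ (Fin (d - 1))) : ℝ) + 1 = d := by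
    rw [finrank_euclideanSpace_fin]
    exact_mod_cast Nat.sub_add_cancel (by omega : 1 ≤ d)
  have hmain := lintegral_div_rpow_le_stripe hp hs1 hsp hϑ hϑ1 K.2 hv.continuous hvK
  rw [hdim] at hmain
  have hleft : ∫⁻ x' : EuclideanSpace ℝ (Fin (d - 1)), ∫⁻ xd in Set.Ioc (0:ℝ) M,
      ENNReal.ofReal (|u x' xd| ^ p / xd ^ (p * s)) =
      ∫⁻ x' : EuclideanSpace ℝ (Fin (d - 1)), ∫⁻ xd in Set.Ioc (0:ℝ) M,
        ENNReal.ofReal (|v (x', xd)| ^ p / xd ^ (p * s)) :=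
    lintegral_congr fun x => setLIntegral_congr_fun measurableSet_Ioc fun t ht => by
      simp only [huv' x t ht]
  have hright : stripeSemi d (Set.Ioc 0 M) ϑ p s u =
      stripeSemi d (Set.Ioc 0 M) ϑ p s (fun x t => v (x, t)) := by
    refine lintegral_congr fun x => setLIntegral_congr_fun measurableSet_Ioc fun t ht =>
      lintegral_congr fun y => setLIntegral_congr_fun (by measurability) fun τ hτ => ?_
    simp only [huv' x t ht, huv' y τ hτ.1]
  rw [hleft, hright]
  exact hmain.trans (by gcongr; exact le_self_add)
end

section
/- Let d ≥ 2, p ≥ 1, s ∈ (0,1] with sp > 1. There exists C = C(s, p, d) such that for all M > 0, ϑ ∈ (0,1], and every Lipschitz function u on the closure of ℝ^d_{M+} lying in 𝔚^{s,p}_ϑ(ℝ^d_{M+}), the trace u(·, 0) satisfies ∫_{ℝ^{d-1}} |u(x', 0)|^p dx' ≤ C ( M^{-1} ‖u‖^p_{L^p(ℝ^d_{M+})} + ϑ^{ps-p} M^{ps-1} |u|^p_{𝔚^{s,p}_ϑ(ℝ^d_{M+})} ). -/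
open MeasureTheory
open scoped ENNReal NNReal

/-- The quasi-triangle inequality for `p`-th powers of distances on the real line. -/
lemma ofReal_abs_sub_rpow_le {p : ℝ} (hp : 1 ≤ p) (a b c : ℝ) :
    ENNReal.ofReal (|a - c| ^ p) ≤ ENNReal.ofReal (2 ^ p) *
      (ENNReal.ofReal (|a - b| ^ p) + ENNReal.ofReal (|b - c| ^ p)) := by
  rw [← ENNReal.ofReal_add (by positivity) (by positivity), ← ENNReal.ofReal_mul (by positivity)]
  refine ENNReal.ofReal_le_ofReal ?_
  have h1 : |a - c| ≤ |a - b| + |b - c| := abs_sub_le a b c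
  have h2 : |a - c| ≤ 2 * max |a - b| |b - c| := by
    linarith [le_max_left |a - b| |b - c|, le_max_right |a - b| |b - c|]
  calc |a - c| ^ p ≤ (2 * max |a - b| |b - c|) ^ p := by gcongr
    _ = 2 ^ p * (max |a - b| |b - c|) ^ p := Real.mul_rpow (by norm_num) (by positivity)
    _ ≤ 2 ^ p * (|a - b| ^ p + |b - c| ^ p) := by
        gcongr
        rcases max_choice |a - b| |b - c| with h | h <;> rw [h]
        · exact le_add_of_nonneg_right (by positivity)
        · exact le_add_of_nonneg_left (by positivity)

/-- Weighted Jensen inequality for finite sums. -/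
lemma sum_rpow_le_weighted {ι : Type*} (S : Finset ι) {p : ℝ} (hp : 1 ≤ p) (w a : ι → ℝ)
    (hw : ∀ i, 0 < w i) (ha : ∀ i, 0 ≤ a i) :
    (∑ i ∈ S, a i) ^ p ≤ (∑ i ∈ S, w i) ^ (p - 1) * ∑ i ∈ S, w i ^ (1 - p) * a i ^ p := by
  have h := Real.inner_le_weight_mul_Lp_of_nonneg S hp w (fun i => a i / w i)
    (fun i => (hw i).le) (fun i => div_nonneg (ha i) (hw i).le)
  have e1 : ∀ i, w i * (a i / w i) = a i := fun i => mul_div_cancel₀ _ (hw i).ne'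
  have e2 : ∀ i, w i * (a i / w i) ^ p = w i ^ (1 - p) * a i ^ p := fun i => by
    rw [Real.div_rpow (ha i) (hw i).le, Real.rpow_sub (hw i), Real.rpow_one]
    ring
  simp only [e1, e2] at h
  have hW : 0 ≤ ∑ i ∈ S, w i := Finset.sum_nonneg fun i _ => (hw i).le
  have hT : 0 ≤ ∑ i ∈ S, w i ^ (1 - p) * a i ^ p :=
    Finset.sum_nonneg fun i _ =>
      mul_nonneg (Real.rpow_nonneg (hw i).le _) (Real.rpow_nonneg (ha i) _)
  have hA : 0 ≤ ∑ i ∈ S, a i := Finset.sum_nonneg fun i _ => ha i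
  have hp0 : p ≠ 0 := by positivity
  calc (∑ i ∈ S, a i) ^ p ≤ _ := Real.rpow_le_rpow hA h (by positivity)
    _ = _ := by
      rw [Real.mul_rpow (by positivity) (by positivity), ← Real.rpow_mul hW, ← Real.rpow_mul hT,
        inv_mul_cancel₀ hp0, Real.rpow_one]
      congr 2
      field_simp

/-- Dilations contract an interval attached to the origin. -/
lemma setLIntegral_Ioc_comp_mul_le {M c : ℝ} (hc0 : 0 < c) (hc1 : c ≤ 1) (h : ℝ → ℝ≥0∞) :
    ∫⁻ t in Set.Ioc 0 M, h (c * t) ≤ ENNReal.ofReal c⁻¹ * ∫⁻ t in Set.Ioc 0 M, h t := by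
  rw [← lintegral_indicator measurableSet_Ioc, ← lintegral_indicator measurableSet_Ioc]
  calc ∫⁻ t, (Set.Ioc 0 M).indicator (fun t => h (c * t)) t
      ≤ ∫⁻ t, (Set.Ioc 0 M).indicator h (c * t) := by
        refine lintegral_mono fun t => ?_
        by_cases ht : t ∈ Set.Ioc 0 M
        · have : c * t ∈ Set.Ioc 0 M :=
            ⟨mul_pos hc0 ht.1, (mul_le_of_le_one_left ht.1.le hc1).trans ht.2⟩
          simp [Set.indicator_of_mem ht, Set.indicator_of_mem this]
        · simp [Set.indicator_of_notMem ht]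
    _ = ∫⁻ t, (Set.Ioc 0 M).indicator h t ∂(Measure.map (fun x => c * x) volume) :=
        ((measurableEmbedding_mulLeft₀ hc0.ne').lintegral_map _).symm
    _ = _ := by
        rw [Real.map_volume_mul_left hc0.ne', lintegral_smul_measure,
          abs_of_pos (inv_pos.2 hc0), smul_eq_mul]

/-- Telescoping along the geometric sequence `l ^ k * t`, `k = 0, 1, …`. -/
lemma ofReal_abs_sub_zero_rpow_le_tsum {p σ γ l B M : ℝ} (hp : 1 ≤ p) (hσ : 0 ≤ σ) (hγ : 0 < γ)
    (hγσ : 1 + γ ≤ σ - γ * (p - 1)) (hl0 : 0 < l) (hl1 : l < 1) (hB : 0 ≤ B)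
    {f : ℝ → ℝ} (hf : Continuous f) {h : ℝ → ℝ≥0∞}
    (hfh : ∀ r ∈ Set.Ioc 0 M, ENNReal.ofReal (|f r - f (l * r)| ^ p) ≤
      ENNReal.ofReal (B * r ^ σ) * (h r + h (l * r)))
    {t : ℝ} (ht : t ∈ Set.Ioc 0 M) :
    ENNReal.ofReal (|f t - f 0| ^ p) ≤ ENNReal.ofReal ((1 - l ^ γ)⁻¹ ^ (p - 1) * (B * M ^ σ)) *
      ∑' k : ℕ, ENNReal.ofReal (l ^ k * (l ^ γ) ^ k) * (h (l ^ k * t) + h (l ^ (k + 1) * t)) := by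
  have ht0 : 0 < t := ht.1
  have hM : 0 < M := ht0.trans_le ht.2
  set ρ := l ^ γ with hρ
  have hρ0 : 0 < ρ := Real.rpow_pos_of_pos hl0 _
  have hρ1 : ρ < 1 := Real.rpow_lt_one hl0.le hl1 hγ
  have hρk : ∀ k : ℕ, ρ ^ k = (l ^ k) ^ γ := fun k => by
    rw [hρ, ← Real.rpow_natCast, ← Real.rpow_mul hl0.le, ← Real.rpow_natCast l,
      ← Real.rpow_mul hl0.le, mul_comm]
  have hstep : ∀ n : ℕ, ENNReal.ofReal (|f t - f (l ^ n * t)| ^ p) ≤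
      ENNReal.ofReal ((1 - ρ)⁻¹ ^ (p - 1) * (B * M ^ σ)) *
      ∑' k : ℕ, ENNReal.ofReal (l ^ k * ρ ^ k) * (h (l ^ k * t) + h (l ^ (k + 1) * t)) := by
    intro n
    set a : ℕ → ℝ := fun k => |f (l ^ k * t) - f (l ^ (k + 1) * t)| with ha
    have h1 : |f t - f (l ^ n * t)| ≤ ∑ k ∈ Finset.range n, a k := by
      have := dist_le_range_sum_dist (fun k : ℕ => f (l ^ k * t)) n
      simpa [Real.dist_eq] using this
    have hW : ∑ k ∈ Finset.range n, ρ ^ k ≤ (1 - ρ)⁻¹ := by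
      rw [← tsum_geometric_of_lt_one hρ0.le hρ1]
      exact (summable_geometric_of_lt_one hρ0.le hρ1).sum_le_tsum _
        fun i _ => (pow_pos hρ0 i).le
    have h2 : |f t - f (l ^ n * t)| ^ p ≤
        (1 - ρ)⁻¹ ^ (p - 1) * ∑ k ∈ Finset.range n, (ρ ^ k) ^ (1 - p) * a k ^ p :=
      calc |f t - f (l ^ n * t)| ^ p ≤ (∑ k ∈ Finset.range n, a k) ^ p := by gcongr
        _ ≤ _ := sum_rpow_le_weighted _ hp (fun k => ρ ^ k) a (fun k => pow_pos hρ0 k)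
            (fun k => abs_nonneg _)
        _ ≤ _ := by
          refine mul_le_mul_of_nonneg_right (Real.rpow_le_rpow
            (Finset.sum_nonneg fun i _ => (pow_pos hρ0 i).le) hW (by linarith)) ?_
          exact Finset.sum_nonneg fun i _ => mul_nonneg
            (Real.rpow_nonneg (pow_pos hρ0 i).le _) (Real.rpow_nonneg (abs_nonneg _) _)
    have hW0 : 0 ≤ (1 - ρ)⁻¹ ^ (p - 1) :=
      Real.rpow_nonneg (inv_nonneg.2 (by linarith)) _
    have hBM : 0 ≤ B * M ^ σ := mul_nonneg hB (Real.rpow_nonneg hM.le _)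
    refine (ENNReal.ofReal_le_ofReal h2).trans ?_
    rw [ENNReal.ofReal_mul hW0, ENNReal.ofReal_mul hW0, mul_assoc]
    gcongr
    rw [ENNReal.ofReal_sum_of_nonneg fun i _ => mul_nonneg
            (Real.rpow_nonneg (pow_pos hρ0 i).le _) (Real.rpow_nonneg (abs_nonneg _) _),
      ← ENNReal.tsum_mul_left]
    refine (Finset.sum_le_sum fun k _ => ?_).trans (ENNReal.sum_le_tsum (Finset.range n))
    have hx0 : 0 < l ^ k := pow_pos hl0 k
    have hx1 : l ^ k ≤ 1 := pow_le_one₀ hl0.le hl1.le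
    have hr : l ^ k * t ∈ Set.Ioc 0 M :=
      ⟨mul_pos hx0 ht0, (mul_le_of_le_one_left ht0.le hx1).trans ht.2⟩
    have hk := hfh _ hr
    rw [show l * (l ^ k * t) = l ^ (k + 1) * t by ring] at hk
    have hw : 0 ≤ (ρ ^ k) ^ (1 - p) := Real.rpow_nonneg (pow_pos hρ0 k).le _
    rw [ENNReal.ofReal_mul hw]
    refine (mul_le_mul_right hk _).trans ?_
    rw [← mul_assoc, ← mul_assoc, ← ENNReal.ofReal_mul hw, ← ENNReal.ofReal_mul hBM]
    gcongr ENNReal.ofReal ?_ * _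
    rw [hρk]
    calc ((l ^ k) ^ γ) ^ (1 - p) * (B * (l ^ k * t) ^ σ)
        = B * ((l ^ k) ^ (γ * (1 - p) + σ) * t ^ σ) := by
          rw [Real.mul_rpow hx0.le ht0.le, Real.rpow_add hx0, Real.rpow_mul hx0.le]
          ring
      _ ≤ B * ((l ^ k) ^ (1 + γ) * M ^ σ) := by
          gcongr B * (?_ * ?_)
          · exact Real.rpow_le_rpow_of_exponent_ge hx0 hx1 (by linarith)
          · exact Real.rpow_le_rpow ht0.le ht.2 hσ
      _ = B * M ^ σ * (l ^ k * (l ^ k) ^ γ) := by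
          rw [Real.rpow_add hx0, Real.rpow_one]
          ring
  have hlim : Filter.Tendsto (fun n : ℕ => ENNReal.ofReal (|f t - f (l ^ n * t)| ^ p))
      Filter.atTop (nhds (ENNReal.ofReal (|f t - f 0| ^ p))) := by
    have h0 : Filter.Tendsto (fun n : ℕ => l ^ n * t) Filter.atTop (nhds 0) := by
      simpa using (tendsto_pow_atTop_nhds_zero_of_lt_one hl0.le hl1).mul_const t
    have hc : Continuous fun r => ENNReal.ofReal (|f t - f r| ^ p) :=
      ENNReal.continuous_ofReal.comp
        ((continuous_const.sub hf).abs.rpow_const fun _ => Or.inr (by linarith))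
    exact (hc.tendsto 0).comp h0
  exact le_of_tendsto' hlim hstep

/-- One-dimensional trace estimate: a continuous function whose increments at scale `ϑ t` are
controlled by a density `h` is controlled at the origin. -/
lemma exists_trace_bound_one_dim {p s A : ℝ} (hp : 1 ≤ p) (hs1 : s ≤ 1)
    (hsp : 1 < s * p) (hA : 0 ≤ A) :
    ∃ C : ℝ, 0 < C ∧ ∀ M : ℝ, 0 < M → ∀ ϑ : ℝ, 0 < ϑ → ϑ ≤ 1 →
      ∀ (f : ℝ → ℝ) (h : ℝ → ℝ≥0∞), Continuous f → Measurable h →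
      (∀ r ∈ Set.Ioc 0 M, ENNReal.ofReal (|f r - f ((1 - ϑ / 4) * r)| ^ p) ≤
        ENNReal.ofReal (A * (ϑ * r) ^ (p * s)) * (h r + h ((1 - ϑ / 4) * r))) →
      ENNReal.ofReal (|f 0| ^ p) ≤ ENNReal.ofReal C *
        (ENNReal.ofReal M⁻¹ * (∫⁻ t in Set.Ioc 0 M, ENNReal.ofReal (|f t| ^ p)) +
          ENNReal.ofReal (ϑ ^ (p * s - p) * M ^ (p * s - 1)) * ∫⁻ t in Set.Ioc 0 M, h t) := by
  have hp0 : 0 < p := by linarith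
  set γ := (p * s - 1) / 2 / p with hγdef
  have hγ : 0 < γ := div_pos (by linarith) hp0
  have hγp : γ * p = (p * s - 1) / 2 := div_mul_cancel₀ _ hp0.ne'
  have hγ1 : γ ≤ 1 := by
    rw [hγdef, div_le_one hp0]
    nlinarith
  refine ⟨2 ^ p * (1 + 3 * A * (4 / γ) ^ p), by positivity, ?_⟩
  intro M hM ϑ hϑ0 hϑ1 f h hf hh hfh
  set l := 1 - ϑ / 4 with hl
  have hl0 : 0 < l := by linarith
  have hl1 : l < 1 := by linarith
  set ρ := l ^ γ with hρ
  have hρ0 : 0 < ρ := Real.rpow_pos_of_pos hl0 _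
  have hρ1 : ρ < 1 := Real.rpow_lt_one hl0.le hl1 hγ
  have hρinv : (1 - ρ)⁻¹ ≤ 4 / γ * ϑ⁻¹ := by
    have hb : l ^ γ ≤ 1 + γ * (-(ϑ / 4)) := by
      rw [hl, sub_eq_add_neg]
      exact rpow_one_add_le_one_add_mul_self (by linarith) hγ.le hγ1
    have : γ * ϑ / 4 ≤ 1 - ρ := by linarith
    calc (1 - ρ)⁻¹ ≤ (γ * ϑ / 4)⁻¹ := by gcongr
      _ = _ := by field_simp
  set D := (1 - ρ)⁻¹ ^ (p - 1) * (A * ϑ ^ (p * s) * M ^ (p * s)) with hD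
  have hρi0 : 0 ≤ (1 - ρ)⁻¹ := inv_nonneg.2 (by linarith)
  have hD0 : 0 ≤ D := by positivity
  set H : ℝ → ℝ≥0∞ := fun t =>
    ∑' k : ℕ, ENNReal.ofReal (l ^ k * ρ ^ k) * (h (l ^ k * t) + h (l ^ (k + 1) * t)) with hH
  have hHm : Measurable H := by
    refine Measurable.tsum fun k => ?_
    fun_prop
  set I := ∫⁻ t in Set.Ioc 0 M, h t with hI
  have hHint : ∫⁻ t in Set.Ioc 0 M, H t ≤ ENNReal.ofReal (3 * (1 - ρ)⁻¹) * I := by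
    rw [hH, lintegral_tsum fun k => by fun_prop]
    have hsum : HasSum (fun k => 3 * ρ ^ k) (3 * (1 - ρ)⁻¹) :=
      (hasSum_geometric_of_lt_one hρ0.le hρ1).mul_left 3
    rw [← hsum.tsum_eq, ENNReal.ofReal_tsum_of_nonneg (fun k => by positivity) hsum.summable,
      ← ENNReal.tsum_mul_right]
    refine ENNReal.tsum_le_tsum fun k => ?_
    rw [lintegral_const_mul _ (by fun_prop), lintegral_add_left (by fun_prop)]
    have hx0 : ∀ k : ℕ, 0 < l ^ k := fun k => pow_pos hl0 k
    have hx1 : ∀ k : ℕ, l ^ k ≤ 1 := fun k => pow_le_one₀ hl0.le hl1.le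
    calc _ ≤ ENNReal.ofReal (l ^ k * ρ ^ k) *
          (ENNReal.ofReal (l ^ k)⁻¹ * I + ENNReal.ofReal (l ^ (k + 1))⁻¹ * I) := by
          gcongr
          · exact setLIntegral_Ioc_comp_mul_le (hx0 k) (hx1 k) h
          · exact setLIntegral_Ioc_comp_mul_le (hx0 (k + 1)) (hx1 (k + 1)) h
      _ = ENNReal.ofReal (l ^ k * ρ ^ k * ((l ^ k)⁻¹ + (l ^ (k + 1))⁻¹)) * I := by
          rw [← add_mul, ← ENNReal.ofReal_add (by positivity) (by positivity), ← mul_assoc,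
            ← ENNReal.ofReal_mul (by positivity)]
      _ ≤ ENNReal.ofReal (3 * ρ ^ k) * I := by
          gcongr ENNReal.ofReal ?_ * _
          have e : l ^ k * ρ ^ k * ((l ^ k)⁻¹ + (l ^ (k + 1))⁻¹) = (1 + l⁻¹) * ρ ^ k := by
            have := hl0.ne'
            rw [pow_succ]
            field_simp
          rw [e]
          gcongr
          have : l⁻¹ ≤ 2 := by
            rw [inv_le_comm₀ hl0 (by norm_num)]
            linarith
          linarith
  have hpt : ∀ t ∈ Set.Ioc 0 M, ENNReal.ofReal (|f 0| ^ p) ≤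
      ENNReal.ofReal (2 ^ p) * (ENNReal.ofReal (|f t| ^ p) + ENNReal.ofReal D * H t) := by
    intro t ht
    have h1 := ofReal_abs_sub_rpow_le hp (f 0) (f t) 0
    rw [sub_zero, sub_zero, add_comm, abs_sub_comm] at h1
    refine h1.trans ?_
    gcongr
    refine ofReal_abs_sub_zero_rpow_le_tsum hp (by nlinarith) hγ (by nlinarith) hl0 hl1
      (by positivity) hf (fun r hr => ?_) ht
    rw [mul_assoc, ← Real.mul_rpow hϑ0.le hr.1.le]
    exact hfh r hr
  have hint : ENNReal.ofReal M * ENNReal.ofReal (|f 0| ^ p) ≤ ENNReal.ofReal (2 ^ p) *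
      ((∫⁻ t in Set.Ioc 0 M, ENNReal.ofReal (|f t| ^ p)) +
        ENNReal.ofReal (D * (3 * (1 - ρ)⁻¹)) * I) := by
    have hfm : Measurable fun t => ENNReal.ofReal (|f t| ^ p) := by
      have := hf.measurable
      fun_prop
    calc ENNReal.ofReal M * ENNReal.ofReal (|f 0| ^ p)
        = ∫⁻ t in Set.Ioc 0 M, ENNReal.ofReal (|f 0| ^ p) := by
          rw [setLIntegral_const, Real.volume_Ioc, sub_zero, mul_comm]
      _ ≤ ∫⁻ t in Set.Ioc 0 M, ENNReal.ofReal (2 ^ p) *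
            (ENNReal.ofReal (|f t| ^ p) + ENNReal.ofReal D * H t) :=
          setLIntegral_mono' measurableSet_Ioc hpt
      _ = ENNReal.ofReal (2 ^ p) * ((∫⁻ t in Set.Ioc 0 M, ENNReal.ofReal (|f t| ^ p)) +
            ENNReal.ofReal D * ∫⁻ t in Set.Ioc 0 M, H t) := by
          rw [lintegral_const_mul _ (by fun_prop), lintegral_add_left hfm,
            lintegral_const_mul _ hHm]
      _ ≤ _ := by
          rw [ENNReal.ofReal_mul hD0, mul_assoc]
          gcongr
  have hDle : M⁻¹ * (D * (3 * (1 - ρ)⁻¹)) ≤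
      3 * A * (4 / γ) ^ p * (ϑ ^ (p * s - p) * M ^ (p * s - 1)) := by
    have e1 : (1 - ρ)⁻¹ ^ (p - 1) * (1 - ρ)⁻¹ = (1 - ρ)⁻¹ ^ p := by
      rw [← Real.rpow_add_one (inv_pos.2 (by linarith)).ne']
      congr 1
      ring
    have e2 : (1 - ρ)⁻¹ ^ p ≤ (4 / γ) ^ p * (ϑ ^ p)⁻¹ := by
      rw [← Real.inv_rpow hϑ0.le, ← Real.mul_rpow (by positivity) (by positivity)]
      gcongr
    calc M⁻¹ * (D * (3 * (1 - ρ)⁻¹))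
        = 3 * A * ((1 - ρ)⁻¹ ^ (p - 1) * (1 - ρ)⁻¹) * (ϑ ^ (p * s) * (M ^ (p * s) * M⁻¹)) := by
          rw [hD]
          ring
      _ ≤ 3 * A * ((4 / γ) ^ p * (ϑ ^ p)⁻¹) * (ϑ ^ (p * s) * (M ^ (p * s) * M⁻¹)) := by
          rw [e1]
          gcongr
      _ = _ := by
          rw [Real.rpow_sub hϑ0, Real.rpow_sub hM, Real.rpow_one]
          ring
  calc ENNReal.ofReal (|f 0| ^ p)
      = ENNReal.ofReal M⁻¹ * (ENNReal.ofReal M * ENNReal.ofReal (|f 0| ^ p)) := by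
        rw [← mul_assoc, ← ENNReal.ofReal_mul (by positivity), inv_mul_cancel₀ hM.ne',
          ENNReal.ofReal_one, one_mul]
    _ ≤ ENNReal.ofReal M⁻¹ * (ENNReal.ofReal (2 ^ p) *
      ((∫⁻ t in Set.Ioc 0 M, ENNReal.ofReal (|f t| ^ p)) +
        ENNReal.ofReal (D * (3 * (1 - ρ)⁻¹)) * I)) := by gcongr
    _ = ENNReal.ofReal (2 ^ p) *
      (ENNReal.ofReal M⁻¹ * (∫⁻ t in Set.Ioc 0 M, ENNReal.ofReal (|f t| ^ p)) +
        ENNReal.ofReal (M⁻¹ * (D * (3 * (1 - ρ)⁻¹))) * I) := by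
        rw [ENNReal.ofReal_mul (inv_nonneg.2 hM.le)]
        ring
    _ ≤ ENNReal.ofReal (2 ^ p) * (ENNReal.ofReal (1 + 3 * A * (4 / γ) ^ p) *
      (ENNReal.ofReal M⁻¹ * (∫⁻ t in Set.Ioc 0 M, ENNReal.ofReal (|f t| ^ p)) +
        ENNReal.ofReal (ϑ ^ (p * s - p) * M ^ (p * s - 1)) * I)) := by
        have hK : 0 ≤ 3 * A * (4 / γ) ^ p := by positivity
        rw [mul_add (ENNReal.ofReal (1 + _))]
        gcongr ENNReal.ofReal (2 ^ p) * (?_ + ?_)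
        · refine le_mul_of_one_le_left' ?_
          rw [ENNReal.one_le_ofReal]
          linarith
        · rw [← mul_assoc (ENNReal.ofReal _), ← ENNReal.ofReal_mul (by positivity)]
          gcongr ENNReal.ofReal ?_ * _
          refine hDle.trans ?_
          gcongr
          linarith
    _ = _ := by
        rw [← mul_assoc, ← ENNReal.ofReal_mul (by positivity)]

/-- The inner integral in `stripeSemi`, as a function of the point `(x', xd)`. -/
noncomputable def stripeDensity (d : ℕ) (S : Set ℝ) (τ p s : ℝ)
    (u : EuclideanSpace ℝ (Fin (d - 1)) → ℝ → ℝ) (x' : EuclideanSpace ℝ (Fin (d - 1)))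
    (xd : ℝ) : ℝ≥0∞ :=
  ∫⁻ y' : EuclideanSpace ℝ (Fin (d - 1)),
    ∫⁻ yd in S ∩ {t : ℝ | dist y' x' ^ 2 + (t - xd) ^ 2 < (τ * xd) ^ 2},
      ENNReal.ofReal (|u y' yd - u x' xd| ^ p / (τ * xd) ^ ((d : ℝ) + p * s))

lemma measurableSet_stripeDensity_section {d : ℕ} {S : Set ℝ} (hS : MeasurableSet S) (τ : ℝ)
    (x' y' : EuclideanSpace ℝ (Fin (d - 1))) (xd : ℝ) :
    MeasurableSet (S ∩ {t : ℝ | dist y' x' ^ 2 + (t - xd) ^ 2 < (τ * xd) ^ 2}) :=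
  hS.inter (measurableSet_lt (by fun_prop) (by fun_prop))

lemma measurable_stripeDensity {d : ℕ} {S : Set ℝ} (hS : MeasurableSet S) (τ p s : ℝ)
    {u : EuclideanSpace ℝ (Fin (d - 1)) → ℝ → ℝ} (hu : Measurable (Function.uncurry u)) :
    Measurable (Function.uncurry (stripeDensity d S τ p s u)) := by
  set F : ((EuclideanSpace ℝ (Fin (d - 1)) × ℝ) × EuclideanSpace ℝ (Fin (d - 1))) × ℝ → ℝ≥0∞ :=
    Set.indicator {z | z.2 ∈ S ∧
        dist z.1.2 z.1.1.1 ^ 2 + (z.2 - z.1.1.2) ^ 2 < (τ * z.1.1.2) ^ 2}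
      (fun z => ENNReal.ofReal
        (|Function.uncurry u (z.1.2, z.2) - Function.uncurry u z.1.1| ^ p /
          (τ * z.1.1.2) ^ ((d : ℝ) + p * s))) with hF
  have hFm : Measurable F := by
    have h1 : Measurable fun z : ((EuclideanSpace ℝ (Fin (d - 1)) × ℝ) ×
        EuclideanSpace ℝ (Fin (d - 1))) × ℝ => Function.uncurry u (z.1.2, z.2) :=
      hu.comp (by fun_prop)
    have h2 : Measurable fun z : ((EuclideanSpace ℝ (Fin (d - 1)) × ℝ) ×
        EuclideanSpace ℝ (Fin (d - 1))) × ℝ => Function.uncurry u z.1.1 :=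
      hu.comp (by fun_prop)
    refine Measurable.indicator (ENNReal.measurable_ofReal.comp
      (((h1.sub h2).abs.pow_const p).div (by fun_prop))) ?_
    exact (measurable_snd hS).inter (measurableSet_lt
      (((measurable_snd.comp measurable_fst).dist
        (measurable_fst.comp (measurable_fst.comp measurable_fst))).pow_const 2 |>.add
          (by fun_prop)) (by fun_prop))
  have e : Function.uncurry (stripeDensity d S τ p s u) =
      fun x => ∫⁻ y', ∫⁻ yd : ℝ, F ((x, y'), yd) := by
    ext x
    obtain ⟨x', xd⟩ := x
    refine lintegral_congr fun y' => ?_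
    rw [← lintegral_indicator (measurableSet_stripeDensity_section hS τ x' y' xd)]
    rfl
  rw [e]
  exact (hFm.lintegral_prod_right').lintegral_prod_right'

lemma setLIntegral_le_stripeDensity {d : ℕ} {S : Set ℝ} (τ p s : ℝ)
    (u : EuclideanSpace ℝ (Fin (d - 1)) → ℝ → ℝ) (x' : EuclideanSpace ℝ (Fin (d - 1)))
    (xd : ℝ) (hτ : 0 < τ * xd) {B : Set (EuclideanSpace ℝ (Fin (d - 1)))}
    (hB : MeasurableSet B) {J : Set ℝ}
    (hBJ : ∀ y' ∈ B, J ⊆ S ∩ {t : ℝ | dist y' x' ^ 2 + (t - xd) ^ 2 < (τ * xd) ^ 2}) :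
    ∫⁻ y' in B, ∫⁻ yd in J, ENNReal.ofReal (|u y' yd - u x' xd| ^ p) ≤
      ENNReal.ofReal ((τ * xd) ^ ((d : ℝ) + p * s)) * stripeDensity d S τ p s u x' xd := by
  have hc : 0 < (τ * xd) ^ ((d : ℝ) + p * s) := Real.rpow_pos_of_pos hτ _
  rw [stripeDensity, ← lintegral_const_mul' _ _ ENNReal.ofReal_ne_top]
  calc _ ≤ ∫⁻ y' in B, ENNReal.ofReal ((τ * xd) ^ ((d : ℝ) + p * s)) *
        ∫⁻ yd in S ∩ {t : ℝ | dist y' x' ^ 2 + (t - xd) ^ 2 < (τ * xd) ^ 2},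
        ENNReal.ofReal (|u y' yd - u x' xd| ^ p / (τ * xd) ^ ((d : ℝ) + p * s)) := by
        refine setLIntegral_mono' hB fun y' hy' => ?_
        rw [← lintegral_const_mul' _ _ ENNReal.ofReal_ne_top]
        refine (lintegral_mono_set (hBJ y' hy')).trans (lintegral_mono fun yd => ?_)
        dsimp only
        rw [← ENNReal.ofReal_mul hc.le, mul_div_cancel₀ _ hc.ne']
    _ ≤ _ := setLIntegral_le_lintegral _ _

/-- Vertical increments at scale `ϑ t` are controlled by the local energy densities at the two
endpoints: both are compared with the values of `u` in a common neighbourhood. -/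
lemma exists_increment_le_stripeDensity {d : ℕ} (hd : 2 ≤ d) {p s : ℝ} (hp : 1 ≤ p)
    (hs0 : 0 < s) :
    ∃ A : ℝ, 0 ≤ A ∧ ∀ M ϑ : ℝ, 0 < ϑ → ϑ ≤ 1 →
      ∀ u : EuclideanSpace ℝ (Fin (d - 1)) → ℝ → ℝ, Measurable (Function.uncurry u) →
      ∀ (x' : EuclideanSpace ℝ (Fin (d - 1))), ∀ t ∈ Set.Ioc 0 M,
      ENNReal.ofReal (|u x' t - u x' ((1 - ϑ / 4) * t)| ^ p) ≤
        ENNReal.ofReal (A * (ϑ * t) ^ (p * s)) *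
          (stripeDensity d (Set.Ioc 0 M) ϑ p s u x' t +
            stripeDensity d (Set.Ioc 0 M) ϑ p s u x' ((1 - ϑ / 4) * t)) := by
  set E := EuclideanSpace ℝ (Fin (d - 1)) with hE
  set β := (volume (Metric.ball (0 : E) 1)).toReal with hβ
  have hβt : volume (Metric.ball (0 : E) 1) ≠ ⊤ := measure_ball_lt_top.ne
  have hβ0 : 0 < β := ENNReal.toReal_pos (Metric.measure_ball_pos _ _ one_pos).ne' hβt
  set c := β / (4 * 2 ^ (d - 1)) with hc
  have hc0 : 0 < c := by positivity
  refine ⟨c⁻¹ * 2 ^ p, by positivity, ?_⟩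
  intro M ϑ hϑ0 hϑ1 u hu x' t ht
  have ht0 : 0 < t := ht.1
  set r := (1 - ϑ / 4) * t with hr
  have hr0 : 0 < r := mul_pos (by linarith) ht0
  have hϑt : 0 < ϑ * t := mul_pos hϑ0 ht0
  have htr : t - r = ϑ * t / 4 := by rw [hr]; ring
  have hrt : r ≤ t := by linarith
  have hr34 : 3 / 4 * t ≤ r := by rw [hr]; nlinarith
  set B := Metric.ball x' (ϑ * t / 2) with hB
  set J := Set.Ioc r t with hJ
  have hvol : volume B * volume J = ENNReal.ofReal (c * (ϑ * t) ^ (d : ℝ)) := by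
    rw [hB, hJ, Real.volume_Ioc, Measure.addHaar_ball_of_pos _ _ (by positivity), htr,
      ← ENNReal.ofReal_toReal hβt, ← ENNReal.ofReal_mul (by positivity),
      ← ENNReal.ofReal_mul (by positivity), finrank_euclideanSpace_fin, Real.rpow_natCast, hc]
    congr 1
    obtain ⟨k, rfl⟩ : ∃ k, d = k + 1 := ⟨d - 1, by omega⟩
    simp only [Nat.add_sub_cancel] at *
    rw [div_pow, pow_succ]
    ring
  have hsq : ∀ y' ∈ B, ∀ yd ∈ J, ∀ z : ℝ, |yd - z| ≤ ϑ * t / 4 → 3 / 4 * t ≤ z →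
      dist y' x' ^ 2 + (yd - z) ^ 2 < (ϑ * z) ^ 2 := by
    intro y' hy' yd hyd z hz hz'
    have h1 : dist y' x' ^ 2 ≤ (ϑ * t / 2) ^ 2 :=
      pow_le_pow_left₀ dist_nonneg (Metric.mem_ball.1 hy').le 2
    have h2 : (yd - z) ^ 2 ≤ (ϑ * t / 4) ^ 2 := by
      rw [← sq_abs]
      exact pow_le_pow_left₀ (abs_nonneg _) hz 2
    have h3 : (3 / 4 * (ϑ * t)) ^ 2 ≤ (ϑ * z) ^ 2 := by
      refine pow_le_pow_left₀ (by positivity) ?_ 2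
      nlinarith
    nlinarith [mul_pos hϑt hϑt]
  have hJS : J ⊆ Set.Ioc 0 M := fun yd hyd => ⟨hr0.trans hyd.1, hyd.2.trans ht.2⟩
  have hsubt : ∀ y' ∈ B,
      J ⊆ Set.Ioc 0 M ∩ {q : ℝ | dist y' x' ^ 2 + (q - t) ^ 2 < (ϑ * t) ^ 2} :=
    fun y' hy' yd hyd => ⟨hJS hyd, hsq y' hy' yd hyd t
      (abs_le.2 ⟨by linarith [hyd.1], by linarith [hyd.2]⟩) (by linarith)⟩
  have hsubr : ∀ y' ∈ B,
      J ⊆ Set.Ioc 0 M ∩ {q : ℝ | dist y' x' ^ 2 + (q - r) ^ 2 < (ϑ * r) ^ 2} :=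
    fun y' hy' yd hyd => ⟨hJS hyd, hsq y' hy' yd hyd r
      (abs_le.2 ⟨by linarith [hyd.1], by linarith [hyd.2]⟩) hr34⟩
  have hmeas : ∀ a : ℝ, Measurable fun z : E × ℝ => ENNReal.ofReal (|u z.1 z.2 - a| ^ p) := by
    intro a
    have hum : Measurable fun z : E × ℝ => u z.1 z.2 := hu
    exact ENNReal.measurable_ofReal.comp ((hum.sub_const a).abs.pow_const p)
  have hmeas' : ∀ (a : ℝ) (y' : E), Measurable fun yd => ENNReal.ofReal (|u y' yd - a| ^ p) := by
    intro a y'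
    have hum : Measurable (u y') := hu.of_uncurry_left
    exact ENNReal.measurable_ofReal.comp ((hum.sub_const a).abs.pow_const p)
  have hmeas'' : Measurable fun y' : E =>
      ∫⁻ yd in J, ENNReal.ofReal (|u y' yd - u x' t| ^ p) :=
    (hmeas _).lintegral_prod_right'
  set Gt := stripeDensity d (Set.Ioc 0 M) ϑ p s u x' t
  set Gr := stripeDensity d (Set.Ioc 0 M) ϑ p s u x' r
  have hmain : ENNReal.ofReal (c * (ϑ * t) ^ (d : ℝ)) * ENNReal.ofReal (|u x' t - u x' r| ^ p) ≤
      ENNReal.ofReal (2 ^ p) * (ENNReal.ofReal ((ϑ * t) ^ ((d : ℝ) + p * s)) * (Gt + Gr)) := by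
    calc _ = ∫⁻ y' in B, ∫⁻ yd in J, ENNReal.ofReal (|u x' t - u x' r| ^ p) := by
          rw [setLIntegral_const, setLIntegral_const, ← hvol]
          ring
      _ ≤ ∫⁻ y' in B, ∫⁻ yd in J, ENNReal.ofReal (2 ^ p) *
            (ENNReal.ofReal (|u y' yd - u x' t| ^ p) +
              ENNReal.ofReal (|u y' yd - u x' r| ^ p)) := by
          refine lintegral_mono fun y' => lintegral_mono fun yd => ?_
          have := ofReal_abs_sub_rpow_le hp (u x' t) (u y' yd) (u x' r)
          rwa [abs_sub_comm (u x' t) (u y' yd)] at this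
      _ = ENNReal.ofReal (2 ^ p) *
            ((∫⁻ y' in B, ∫⁻ yd in J, ENNReal.ofReal (|u y' yd - u x' t| ^ p)) +
              ∫⁻ y' in B, ∫⁻ yd in J, ENNReal.ofReal (|u y' yd - u x' r| ^ p)) := by
          rw [← lintegral_add_left hmeas'',
            ← lintegral_const_mul' _ _ ENNReal.ofReal_ne_top]
          refine lintegral_congr fun y' => ?_
          rw [← lintegral_add_left (hmeas' _ y'),
            ← lintegral_const_mul' _ _ ENNReal.ofReal_ne_top]
      _ ≤ ENNReal.ofReal (2 ^ p) * (ENNReal.ofReal ((ϑ * t) ^ ((d : ℝ) + p * s)) * Gt +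
            ENNReal.ofReal ((ϑ * r) ^ ((d : ℝ) + p * s)) * Gr) := by
          gcongr
          · exact setLIntegral_le_stripeDensity ϑ p s u x' t hϑt measurableSet_ball hsubt
          · exact setLIntegral_le_stripeDensity ϑ p s u x' r (mul_pos hϑ0 hr0)
              measurableSet_ball hsubr
      _ ≤ _ := by
          rw [mul_add (ENNReal.ofReal ((ϑ * t) ^ ((d : ℝ) + p * s)))]
          gcongr
  have hm0 : 0 < c * (ϑ * t) ^ (d : ℝ) := by positivity
  calc ENNReal.ofReal (|u x' t - u x' r| ^ p)
      = ENNReal.ofReal (c * (ϑ * t) ^ (d : ℝ))⁻¹ * (ENNReal.ofReal (c * (ϑ * t) ^ (d : ℝ)) *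
          ENNReal.ofReal (|u x' t - u x' r| ^ p)) := by
        rw [← mul_assoc, ← ENNReal.ofReal_mul (by positivity), inv_mul_cancel₀ hm0.ne',
          ENNReal.ofReal_one, one_mul]
    _ ≤ _ := mul_le_mul_right hmain _
    _ = ENNReal.ofReal ((c * (ϑ * t) ^ (d : ℝ))⁻¹ *
          (2 ^ p * (ϑ * t) ^ ((d : ℝ) + p * s))) * (Gt + Gr) := by
        rw [ENNReal.ofReal_mul (by positivity), ENNReal.ofReal_mul (by positivity)]
        ring
    _ = _ := by
        congr 2
        rw [Real.rpow_add hϑt]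
        have := (Real.rpow_pos_of_pos hϑt (d : ℝ)).ne'
        field_simp

/-- The trace estimate for functions that are continuous on the whole space. -/
lemma exists_trace_bound_of_continuous {d : ℕ} (hd : 2 ≤ d) {p s : ℝ} (hp : 1 ≤ p)
    (hs0 : 0 < s) (hs1 : s ≤ 1) (hsp : 1 < s * p) :
    ∃ C : ℝ, 0 < C ∧ ∀ (M : ℝ), 0 < M → ∀ (ϑ : ℝ), 0 < ϑ → ϑ ≤ 1 →
      ∀ u : EuclideanSpace ℝ (Fin (d - 1)) → ℝ → ℝ, Continuous (Function.uncurry u) →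
        (∫⁻ x' : EuclideanSpace ℝ (Fin (d - 1)), ENNReal.ofReal (|u x' 0| ^ p)) ≤
          ENNReal.ofReal C *
            (ENNReal.ofReal M⁻¹ * stripeLp d (Set.Ioc 0 M) p u +
              ENNReal.ofReal (ϑ ^ (p * s - p) * M ^ (p * s - 1)) *
                stripeSemi d (Set.Ioc 0 M) ϑ p s u) := by
  obtain ⟨A, hA, hAu⟩ := exists_increment_le_stripeDensity hd hp hs0
  obtain ⟨C, hC, hCf⟩ := exists_trace_bound_one_dim hp hs1 hsp hA
  refine ⟨C, hC, fun M hM ϑ hϑ0 hϑ1 u hu => ?_⟩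
  have hGm := measurable_stripeDensity (d := d) (measurableSet_Ioc (a := (0 : ℝ)) (b := M))
    ϑ p s hu.measurable
  have hum : Measurable fun z : EuclideanSpace ℝ (Fin (d - 1)) × ℝ => u z.1 z.2 := hu.measurable
  have hLm : Measurable fun z : EuclideanSpace ℝ (Fin (d - 1)) × ℝ =>
      ENNReal.ofReal (|u z.1 z.2| ^ p) :=
    ENNReal.measurable_ofReal.comp (hum.abs.pow_const p)
  have hLm' : Measurable fun x' : EuclideanSpace ℝ (Fin (d - 1)) => ENNReal.ofReal M⁻¹ *
      ∫⁻ t in Set.Ioc 0 M, ENNReal.ofReal (|u x' t| ^ p) :=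
    hLm.lintegral_prod_right'.const_mul _
  have hpt : ∀ x' : EuclideanSpace ℝ (Fin (d - 1)), ENNReal.ofReal (|u x' 0| ^ p) ≤
      ENNReal.ofReal C *
      (ENNReal.ofReal M⁻¹ * (∫⁻ t in Set.Ioc 0 M, ENNReal.ofReal (|u x' t| ^ p)) +
        ENNReal.ofReal (ϑ ^ (p * s - p) * M ^ (p * s - 1)) *
          ∫⁻ t in Set.Ioc 0 M, stripeDensity d (Set.Ioc 0 M) ϑ p s u x' t) := by
    intro x'
    have hc : Continuous (u x') := hu.uncurry_left x'
    have hm : Measurable (stripeDensity d (Set.Ioc 0 M) ϑ p s u x') := hGm.of_uncurry_left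
    exact hCf M hM ϑ hϑ0 hϑ1 (u x') _ hc hm (hAu M ϑ hϑ0 hϑ1 u hu.measurable x')
  calc _ ≤ _ := lintegral_mono hpt
    _ = _ := by
      rw [lintegral_const_mul' _ _ ENNReal.ofReal_ne_top, lintegral_add_left hLm',
        lintegral_const_mul' _ _ ENNReal.ofReal_ne_top,
        lintegral_const_mul' _ _ ENNReal.ofReal_ne_top]
      simp only [stripeLp, stripeSemi, stripeDensity]

/-- `L^p` bound for the trace on `Γ = ℝ^{d-1} × {0}` of a Lipschitz function on the
stripe `ℝ^{d-1} × (0,M]`, with a constant independent of `M` and `ϑ`. -/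
theorem stmt_12 (d : ℕ) (hd : 2 ≤ d) (p s : ℝ) (hp : 1 ≤ p) (hs0 : 0 < s)
    (hs1 : s ≤ 1) (hsp : 1 < s * p) :
    ∃ C : ℝ, 0 < C ∧ ∀ (M : ℝ), 0 < M → ∀ (ϑ : ℝ), 0 < ϑ → ϑ ≤ 1 →
      ∀ (u : EuclideanSpace ℝ (Fin (d - 1)) → ℝ → ℝ) (K : NNReal),
        LipschitzOnWith K (fun q : EuclideanSpace ℝ (Fin (d - 1)) × ℝ => u q.1 q.2)
          {q : EuclideanSpace ℝ (Fin (d - 1)) × ℝ | q.2 ∈ Set.Icc 0 M} →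
        stripeSemi d (Set.Ioc 0 M) ϑ p s u ≠ ⊤ →
        (∫⁻ x' : EuclideanSpace ℝ (Fin (d - 1)), ENNReal.ofReal (|u x' 0| ^ p)) ≤
          ENNReal.ofReal C *
            (ENNReal.ofReal M⁻¹ * stripeLp d (Set.Ioc 0 M) p u +
              ENNReal.ofReal (ϑ ^ (p * s - p) * M ^ (p * s - 1)) *
                stripeSemi d (Set.Ioc 0 M) ϑ p s u) := by
  obtain ⟨C, hC, hCu⟩ := exists_trace_bound_of_continuous hd hp hs0 hs1 hsp
  refine ⟨C, hC, fun M hM ϑ hϑ0 hϑ1 u K hu _ => ?_⟩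
  set v : EuclideanSpace ℝ (Fin (d - 1)) → ℝ → ℝ := fun x' t => u x' (max 0 (min t M)) with hv
  have hvc : Continuous (Function.uncurry v) :=
    hu.continuousOn.comp_continuous
      (f := fun q : EuclideanSpace ℝ (Fin (d - 1)) × ℝ => (q.1, max 0 (min q.2 M)))
      (by fun_prop) fun q => ⟨le_max_left _ _, max_le hM.le (min_le_right _ _)⟩
  have hvu : ∀ x', ∀ t ∈ Set.Icc 0 M, v x' t = u x' t := fun x' t ht => by
    simp only [hv, min_eq_left ht.2, max_eq_right ht.1]
  have hvu' : ∀ x', ∀ t ∈ Set.Ioc 0 M, v x' t = u x' t := fun x' t ht =>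
    hvu x' t (Set.Ioc_subset_Icc_self ht)
  have e1 : stripeLp d (Set.Ioc 0 M) p v = stripeLp d (Set.Ioc 0 M) p u :=
    lintegral_congr fun x' => setLIntegral_congr_fun measurableSet_Ioc fun t ht => by
      simp only [hvu' x' t ht]
  have e2 : stripeSemi d (Set.Ioc 0 M) ϑ p s v = stripeSemi d (Set.Ioc 0 M) ϑ p s u :=
    lintegral_congr fun x' => setLIntegral_congr_fun measurableSet_Ioc fun t ht =>
      lintegral_congr fun y' => setLIntegral_congr_fun
        (measurableSet_stripeDensity_section measurableSet_Ioc ϑ x' y' t) fun yd hyd => by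
          simp only [hvu' x' t ht, hvu' y' yd hyd.1]
  have h := hCu M hM ϑ hϑ0 hϑ1 v hvc
  simpa only [e1, e2, hvu _ 0 (Set.left_mem_Icc.2 hM.le)] using h
end
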